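/- arXiv:2504.21438 — 4 statements merged into one kernel-verified Lean document; each statement's English description precedes it below -/
import Mathlib

section
/- Let V be a random vector in [0,∞)^d and let ν be a Borel measure on E = [0,∞)^d \ {0}, finite on Borel sets bounded away from 0, such that lim_{t→∞} t·P(t⁻¹V ∈ B) = ν(B) for every Borel set B ⊆ E bounded away from 0 with ν(∂B) = 0. Assume ν(𝕃₁) > 0 and ν(∂𝕃₁) = 0. Then the conditional law of t⁻¹V given V ≰ 1·t converges weakly, as t → ∞, to the probability measure B ↦ ν(B ∩ 𝕃₁)/ν(𝕃₁); that is, for every bounded continuous h : ℝ^d → ℝ, lim_{t→∞} E[h(t⁻¹V) | V ≰ t·1] = (1/ν(𝕃₁)) ∫_{𝕃₁} h dν. -/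
open MeasureTheory Filter Set

/-!
Intersecting a continuity set of the limit `ν(· ∩ 𝕃₁)/ν(𝕃₁)` with `𝕃₁` gives a continuity set of `ν`
bounded away from `0`, because `ν(∂𝕃₁) = 0`. Regular variation therefore applies to the numerator
and to the denominator of `P(t⁻¹V ∈ E ∩ 𝕃₁) / P(t⁻¹V ∈ 𝕃₁)`; the factor `t` cancels in the quotient,
and the portmanteau theorem turns convergence on continuity sets into weak convergence.
-/

section WeakConvergence

open scoped Topology BoundedContinuousFunction

variable {S T : Type*} [MeasurableSpace S] {l : Filter T} {b : T → ℝ}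

theorem eventually_ne_zero_of_tendsto_mul_mass {κ : T → FiniteMeasure S} {ν : FiniteMeasure S}
    (hν : ν ≠ 0) (hmass : Tendsto (fun t ↦ b t * (κ t).mass) l (𝓝 ν.mass)) :
    ∀ᶠ t in l, b t ≠ 0 ∧ κ t ≠ 0 := by
  have hν_mass : (ν.mass : ℝ) ≠ 0 := by exact_mod_cast ν.mass_nonzero_iff.2 hν
  filter_upwards [hmass.eventually_ne hν_mass] with t ht
  exact ⟨left_ne_zero_of_mul ht,
    (κ t).mass_nonzero_iff.1 (by exact_mod_cast right_ne_zero_of_mul ht)⟩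

theorem tendsto_normalize_apply_of_tendsto_mul [Nonempty S]
    {κ : T → FiniteMeasure S} {ν : FiniteMeasure S} {E : Set S} (hν : ν ≠ 0)
    (hmass : Tendsto (fun t ↦ b t * (κ t).mass) l (𝓝 ν.mass))
    (hE : Tendsto (fun t ↦ b t * κ t E) l (𝓝 (ν E))) :
    Tendsto (fun t ↦ (κ t).normalize E) l (𝓝 (ν.normalize E)) := by
  have hν_mass : (ν.mass : ℝ) ≠ 0 := by exact_mod_cast ν.mass_nonzero_iff.2 hν
  rw [← NNReal.tendsto_coe, ν.normalize_eq_of_nonzero hν, NNReal.coe_mul, NNReal.coe_inv,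
    ← div_eq_inv_mul]
  refine (hE.div hmass hν_mass).congr' ?_
  filter_upwards [eventually_ne_zero_of_tendsto_mul_mass hν hmass] with t ⟨hb, hκ⟩
  rw [Pi.div_apply, mul_div_mul_left _ _ hb,
    (κ t).normalize_eq_of_nonzero hκ, NNReal.coe_mul, NNReal.coe_inv, div_eq_inv_mul]

variable [TopologicalSpace S] [OpensMeasurableSpace S]

theorem measure_frontier_inter_eq_zero_of_restrict {ν : Measure S} {L E : Set S}
    (hL : ν (frontier L) = 0) (hE : ν.restrict L (frontier E) = 0) :
    ν (frontier (E ∩ L)) = 0 := by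
  rw [Measure.restrict_apply isClosed_frontier.measurableSet] at hE
  refine measure_mono_null (fun x hx ↦ ?_) (measure_union_null hE hL)
  rcases frontier_inter_subset E L hx with ⟨hxE, hxL⟩ | ⟨-, hxL⟩
  · rw [closure_eq_self_union_frontier] at hxL
    exact hxL.imp_left fun h ↦ ⟨hxE, h⟩
  · exact Or.inr hxL

variable [TopologicalSpace.PseudoMetrizableSpace S] [l.IsCountablyGenerated]

theorem tendsto_normalize_of_forall_tendsto_mul [Nonempty S]
    {κ : T → FiniteMeasure S} {ν : FiniteMeasure S} (hν : ν ≠ 0)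
    (h : ∀ E, MeasurableSet E → (ν : Measure S) (frontier E) = 0 →
      Tendsto (fun t ↦ b t * κ t E) l (𝓝 (ν E))) :
    Tendsto (fun t ↦ (κ t).normalize) l (𝓝 ν.normalize) := by
  have hmass := h univ MeasurableSet.univ (by simp)
  refine tendsto_of_forall_isOpen_le_liminf' fun G hG ↦
    le_liminf_measure_open_of_forall_tendsto_measure (fun {E} hE hE_null ↦ ?_) G hG
  rw [ν.toMeasure_normalize_eq_of_nonzero hν, Measure.smul_apply, smul_eq_zero] at hE_null
  have hE_null : (ν : Measure S) (frontier E) = 0 :=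
    hE_null.resolve_left (inv_ne_zero (ν.mass_nonzero_iff.2 hν))
  simpa using ENNReal.tendsto_coe.2
    (tendsto_normalize_apply_of_tendsto_mul hν hmass (h E hE hE_null))

theorem tendsto_average_of_forall_tendsto_mul
    {κ : T → FiniteMeasure S} {ν : FiniteMeasure S} (hν : ν ≠ 0)
    (h : ∀ E, MeasurableSet E → (ν : Measure S) (frontier E) = 0 →
      Tendsto (fun t ↦ b t * κ t E) l (𝓝 (ν E))) (f : S →ᵇ ℝ) :
    Tendsto (fun t ↦ ⨍ x, f x ∂(κ t : Measure S)) l (𝓝 (⨍ x, f x ∂(ν : Measure S))) := by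
  have : Nonempty S := by
    by_contra hS
    have : IsEmpty S := not_nonempty_iff.1 hS
    exact hν (Subtype.ext (Measure.eq_zero_of_isEmpty _))
  have hweak := ProbabilityMeasure.tendsto_iff_forall_integral_tendsto.1
    (tendsto_normalize_of_forall_tendsto_mul hν h) f
  rw [ν.average_eq_integral_normalize hν]
  refine hweak.congr' ?_
  filter_upwards [eventually_ne_zero_of_tendsto_mul_mass hν (h univ .univ (by simp))] with t ht
  exact ((κ t).average_eq_integral_normalize ht.2 f).symm

theorem tendsto_setAverage_of_forall_tendsto_mul
    {κ : T → Measure S} [∀ t, IsFiniteMeasure (κ t)] {ν : Measure S} {L : Set S}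
    (hL : MeasurableSet L) (hL_ne_zero : ν L ≠ 0) (hL_ne_top : ν L ≠ ⊤)
    (hL_frontier : ν (frontier L) = 0)
    (h : ∀ B ⊆ L, MeasurableSet B → ν (frontier B) = 0 →
      Tendsto (fun t ↦ b t * (κ t).real B) l (𝓝 (ν.real B))) (f : S →ᵇ ℝ) :
    Tendsto (fun t ↦ ⨍ x in L, f x ∂κ t) l (𝓝 (⨍ x in L, f x ∂ν)) := by
  let κL (t : T) : FiniteMeasure S := ⟨(κ t).restrict L, inferInstance⟩
  let νL : FiniteMeasure S := ⟨ν.restrict L, isFiniteMeasure_restrict.2 hL_ne_top⟩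
  have hνL : νL ≠ 0 := fun h0 ↦
    hL_ne_zero (Measure.restrict_eq_zero.1 (congrArg FiniteMeasure.toMeasure h0))
  refine tendsto_average_of_forall_tendsto_mul (κ := κL) (b := b) hνL (fun E hE hE_null ↦ ?_) f
  have hEL := h (E ∩ L) inter_subset_right (hE.inter hL)
    (measure_frontier_inter_eq_zero_of_restrict hL_frontier hE_null)
  simp only [← measureReal_restrict_apply hE] at hEL
  exact hEL

theorem conditional_law_weak_convergence_general
    {Ω : Type*} [MeasurableSpace Ω] {ℙ : Measure Ω} [IsFiniteMeasure ℙ] {X : T → Ω → S}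
    (hX : ∀ t, Measurable (X t)) {ν : Measure S} {L : Set S} (hL : MeasurableSet L)
    (hL_ne_zero : ν L ≠ 0) (hL_ne_top : ν L ≠ ⊤) (hL_frontier : ν (frontier L) = 0)
    (h : ∀ B ⊆ L, MeasurableSet B → ν (frontier B) = 0 →
      Tendsto (fun t ↦ b t * (ℙ {ω | X t ω ∈ B}).toReal) l (𝓝 (ν B).toReal)) (f : S →ᵇ ℝ) :
    Tendsto (fun t ↦ (∫ ω in {ω | X t ω ∈ L}, f (X t ω) ∂ℙ) / (ℙ {ω | X t ω ∈ L}).toReal) l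
      (𝓝 ((∫ x in L, f x ∂ν) / (ν L).toReal)) := by
  have hlaw (B : Set S) (hBL : B ⊆ L) (hB : MeasurableSet B) (hB_null : ν (frontier B) = 0) :
      Tendsto (fun t ↦ b t * (ℙ.map (X t)).real B) l (𝓝 (ν.real B)) := by
    simp only [map_measureReal_apply (hX _) hB]
    exact h B hBL hB hB_null
  have haverage := tendsto_setAverage_of_forall_tendsto_mul hL hL_ne_zero hL_ne_top
    hL_frontier hlaw f
  simp only [setAverage_eq, smul_eq_mul, ← div_eq_inv_mul, map_measureReal_apply (hX _) hL,
    setIntegral_map hL f.continuous.aestronglyMeasurable (hX _).aemeasurable] at haverage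
  exact haverage

end WeakConvergence

section ExceedanceSet

variable {ι : Type*}

/-- The paper's `𝕃₁`: the vectors of the nonnegative orthant that are not bounded by `1`
coordinatewise. -/
def exceedanceSet (ι : Type*) : Set (ι → ℝ) := {x | (∀ j, 0 ≤ x j) ∧ ∃ j, 1 < x j}

theorem measurableSet_exceedanceSet [Countable ι] : MeasurableSet (exceedanceSet ι) := by
  unfold exceedanceSet
  measurability

theorem exceedanceSet_subset_nonneg_diff_zero :
    exceedanceSet ι ⊆ {x | ∀ j, 0 ≤ x j} \ {0} := by
  rintro x ⟨hx, j, hj⟩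
  refine ⟨hx, ?_⟩
  rintro rfl
  exact hj.not_ge zero_le_one

theorem zero_notMem_closure_exceedanceSet [Finite ι] :
    (0 : ι → ℝ) ∉ closure (exceedanceSet ι) := by
  have hclosed : IsClosed (⋃ j, {x : ι → ℝ | 1 ≤ x j}) :=
    isClosed_iUnion_of_finite fun j ↦ isClosed_le continuous_const (continuous_apply j)
  have hsubset : exceedanceSet ι ⊆ ⋃ j, {x | 1 ≤ x j} := fun x ⟨_, j, hj⟩ ↦
    mem_iUnion.2 ⟨j, hj.le⟩
  intro h0
  obtain ⟨_, hj⟩ := mem_iUnion.1 (closure_minimal hsubset hclosed h0)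
  exact (zero_lt_one (α := ℝ)).not_ge hj

theorem inv_smul_mem_exceedanceSet_iff {x : ι → ℝ} (hx : ∀ j, 0 ≤ x j) {t : ℝ} (ht : 0 < t) :
    t⁻¹ • x ∈ exceedanceSet ι ↔ ∃ j, t < x j := by
  have hnonneg (j : ι) : 0 ≤ t⁻¹ * x j := mul_nonneg (inv_nonneg.2 ht.le) (hx j)
  simp [exceedanceSet, hnonneg, lt_inv_mul_iff₀ ht]

end ExceedanceSet

/-- Multivariate regular variation of `V` with exponent measure `ν` implies weak convergence of
the conditional law of `t⁻¹ V` given `V ≰ t·1` to `ν(· ∩ 𝕃₁)/ν(𝕃₁)`. -/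
theorem conditional_law_weak_convergence
    {d : ℕ} {Ω : Type*} [MeasurableSpace Ω] (ℙ : Measure Ω) [IsProbabilityMeasure ℙ]
    (V : Ω → Fin d → ℝ) (hV : Measurable V) (hVnonneg : ∀ ω j, 0 ≤ V ω j)
    (ν : Measure (Fin d → ℝ))
    -- ν is finite on Borel subsets of E = [0,∞)^d \ {0} that are bounded away from 0
    (hfin : ∀ B : Set (Fin d → ℝ), MeasurableSet B →
      B ⊆ {x | ∀ j, 0 ≤ x j} \ {0} → (0 : Fin d → ℝ) ∉ closure B → ν B < ⊤)
    -- regular variation: t·P(t⁻¹ V ∈ B) → ν(B) for ν-continuity sets B bounded away from 0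
    (hconv : ∀ B : Set (Fin d → ℝ), MeasurableSet B →
      B ⊆ {x | ∀ j, 0 ≤ x j} \ {0} → (0 : Fin d → ℝ) ∉ closure B → ν (frontier B) = 0 →
      Tendsto (fun t : ℝ => t * (ℙ {ω | t⁻¹ • V ω ∈ B}).toReal) atTop (nhds (ν B).toReal))
    (L1 : Set (Fin d → ℝ)) (hL1 : L1 = {x | (∀ j, 0 ≤ x j) ∧ ∃ j, 1 < x j})
    (hpos : 0 < ν L1) (hbd : ν (frontier L1) = 0) :
    ∀ h : BoundedContinuousFunction (Fin d → ℝ) ℝ,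
      Tendsto (fun t : ℝ =>
          (∫ ω in {ω | ∃ j, t < V ω j}, h (t⁻¹ • V ω) ∂ℙ) /
            (ℙ {ω | ∃ j, t < V ω j}).toReal)
        atTop
        (nhds ((∫ x in L1, h x ∂ν) / (ν L1).toReal)) := by
  obtain rfl : L1 = exceedanceSet (Fin d) := hL1
  intro h
  have hL1E : exceedanceSet (Fin d) ⊆ _ := exceedanceSet_subset_nonneg_diff_zero
  have hL1_zero := zero_notMem_closure_exceedanceSet (ι := Fin d)
  have hlim := conditional_law_weak_convergence_general (fun t : ℝ ↦ hV.const_smul t⁻¹)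
    measurableSet_exceedanceSet hpos.ne' (hfin _ measurableSet_exceedanceSet hL1E hL1_zero).ne hbd
    (fun B hBL hB ↦ hconv B hB (hBL.trans hL1E) fun h0 ↦ hL1_zero (closure_mono hBL h0)) h
  refine hlim.congr' ?_
  filter_upwards [eventually_gt_atTop 0] with t ht
  simp only [Pi.smul_apply, inv_smul_mem_exceedanceSet_iff (hVnonneg _) ht]
end

section
/- (Proposition 1, main part.) Let X = (X_1, …, X_d) be a random vector whose marginal distribution functions F_1, …, F_d are continuous, and let V = (1/(1 − F_j(X_j)))_{j=1}^d. Assume: (i) there is a Borel measure ν on E = [0,∞)^d \ {0}, finite on Borel sets bounded away from 0, with ν(𝕃₁) > 0, ν(∂𝕃₁) = 0, and lim_{t→∞} t·P(t⁻¹V ∈ B) = ν(B) for every Borel B ⊆ E bounded away from 0 with ν(∂B) = 0; (ii) ν({x ∈ E : x_j = 0 for some j ∈ {1,…,d}}) = 0; (iii) for each j there exist ξ_j ∈ ℝ and a_j : (1,∞) → (0,∞) such that, with b_j(t) = inf{x : F_j(x) ≥ 1 − 1/t}, lim_{t→∞} (b_j(ty) − b_j(t))/a_j(t) = (y^{ξ_j}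 − 1)/ξ_j for all y > 0 (interpreted as log y when ξ_j = 0). Then the conditional law of ((X_j − b_j(t))/a_j(t))_{j=1}^d given X ≰ b(t) converges weakly, as t → ∞, to the law of ((Y_j^{ξ_j} − 1)/ξ_j)_{j=1}^d, where Y is a random vector with law P(Y ∈ B) = ν(B ∩ 𝕃₁)/ν(𝕃₁). -/
open MeasureTheory Filter Set

/-!
Write `b_j` for the tail quantile function of `X_j`. Since the margins are continuous, almost surely
`X_j = b_j(V_j)`, and `X ≰ b(t)` holds exactly when `t⁻¹V ∈ 𝕃₁`. Regular variation on the
`ν`-continuity subsets of `𝕃₁` therefore says, by the portmanteau theorem, that the conditional law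
of `t⁻¹V` given `X ≰ b(t)` converges weakly to `ν(· ∩ 𝕃₁)/ν(𝕃₁)`.

On the other hand `(X_j - b_j(t))/a_j(t) = φ_{t,j}(t⁻¹V_j)` with
`φ_{t,j}(y) = (b_j(ty) - b_j(t))/a_j(t)`, which is monotone in `y`. Hence its pointwise convergence
on `(0,∞)` to a continuous limit is locally uniform, and as the limit law does not charge
the coordinate hyperplanes, the extended continuous mapping theorem applies.
-/

section ConvergenceInDistribution

open ProbabilityTheory Topology

variable {κ Ω' E : Type*} {Ω : κ → Type*}
  {mΩ : ∀ i, MeasurableSpace (Ω i)} {P : ∀ i, Measure (Ω i)} [∀ i, IsProbabilityMeasure (P i)]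
  [MeasurableSpace Ω'] {μ : Measure Ω'} [IsProbabilityMeasure μ]
  [TopologicalSpace E] [MeasurableSpace E] [OpensMeasurableSpace E]
  {l : Filter κ} {Z : ∀ i, Ω i → E} {Y : Ω' → E}

theorem tendstoInDistribution_of_forall_isOpen_le_liminf [l.IsCountablyGenerated]
    (hZ : ∀ i, AEMeasurable (Z i) (P i)) (hY : AEMeasurable Y μ)
    (hopen : ∀ G, IsOpen G → μ (Y ⁻¹' G) ≤ liminf (fun i => P i (Z i ⁻¹' G)) l) :
    TendstoInDistribution Z l Y P μ where
  forall_aemeasurable := hZ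
  aemeasurable_limit := hY
  tendsto := by
    refine tendsto_of_forall_isOpen_le_liminf' fun G hG => ?_
    simp only [ProbabilityMeasure.coe_mk, Measure.map_apply_of_aemeasurable (hZ _) hG.measurableSet,
      Measure.map_apply_of_aemeasurable hY hG.measurableSet]
    exact hopen G hG

theorem measure_preimage_le_liminf_of_tendstoInDistribution [HasOuterApproxClosed E]
    (h : TendstoInDistribution Z l Y P μ) {G : Set E} (hG : IsOpen G) :
    μ (Y ⁻¹' G) ≤ liminf (fun i => P i (Z i ⁻¹' G)) l := by
  have hle := ProbabilityMeasure.le_liminf_measure_open_of_tendsto h.tendsto hG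
  simpa only [ProbabilityMeasure.coe_mk, Measure.map_apply_of_aemeasurable
    (h.forall_aemeasurable _) hG.measurableSet, Measure.map_apply_of_aemeasurable
    h.aemeasurable_limit hG.measurableSet] using hle

theorem tendsto_integral_of_tendstoInDistribution
    (h : TendstoInDistribution Z l Y P μ) (f : BoundedContinuousFunction E ℝ) :
    Tendsto (fun i => ∫ ω, f (Z i ω) ∂P i) l (𝓝 (∫ ω, f (Y ω) ∂μ)) := by
  have hlim := ProbabilityMeasure.tendsto_iff_forall_integral_tendsto.1 h.tendsto f
  simpa only [ProbabilityMeasure.coe_mk,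
    integral_map (h.forall_aemeasurable _) f.continuous.measurable.aestronglyMeasurable,
    integral_map h.aemeasurable_limit f.continuous.measurable.aestronglyMeasurable] using hlim

/-- **Extended continuous mapping theorem**. Up to a null set, the limit falls into an open set `G`
only if `Y` lies in one of the open sets `W n`, the interior of the set of points that `φ i` maps
into `G` for all `i` in the `n`-th set of a countable antitone basis of `l`. -/
theorem tendstoInDistribution_of_tendsto_uncurry {F : Type*} [HasOuterApproxClosed E]
    [TopologicalSpace F] [MeasurableSpace F] [OpensMeasurableSpace F] [l.IsCountablyGenerated]
    {φ : κ → E → F} {g : E → F} (h : TendstoInDistribution Z l Y P μ)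
    (hφZ : ∀ i, AEMeasurable (fun ω => φ i (Z i ω)) (P i)) (hgY : AEMeasurable (fun ω => g (Y ω)) μ)
    (hφ : ∀ᵐ ω ∂μ, Tendsto (fun p : κ × E => φ p.1 p.2) (l ×ˢ 𝓝 (Y ω)) (𝓝 (g (Y ω)))) :
    TendstoInDistribution (fun i ω => φ i (Z i ω)) l (fun ω => g (Y ω)) P μ := by
  refine tendstoInDistribution_of_forall_isOpen_le_liminf hφZ hgY fun G hG => ?_
  obtain ⟨s, hs⟩ := l.exists_antitone_basis
  let W : ℕ → Set E := fun n => interior {x | ∀ i ∈ s n, φ i x ∈ G}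
  have hWmono : Monotone W := fun m n hmn =>
    interior_mono fun x hx i hi => hx i (hs.antitone hmn hi)
  have hcover : (fun ω => g (Y ω)) ⁻¹' G ≤ᵐ[μ] ⋃ n, Y ⁻¹' W n := by
    filter_upwards [hφ] with ω hω hGω
    obtain ⟨t, ht, u, hu, htu⟩ := mem_prod_iff.1 (hω (hG.mem_nhds hGω))
    obtain ⟨n, hn⟩ := hs.mem_iff.1 ht
    exact mem_iUnion.2 ⟨n, mem_interior_iff_mem_nhds.2 <|
      mem_of_superset hu fun x hx i hi => htu (mk_mem_prod (hn hi) hx)⟩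
  calc μ ((fun ω => g (Y ω)) ⁻¹' G) ≤ μ (⋃ n, Y ⁻¹' W n) := measure_mono_ae hcover
    _ = ⨆ n, μ (Y ⁻¹' W n) :=
      Monotone.measure_iUnion fun m n hmn => preimage_mono (hWmono hmn)
    _ ≤ liminf (fun i => P i ((fun ω => φ i (Z i ω)) ⁻¹' G)) l := iSup_le fun n => by
      refine (measure_preimage_le_liminf_of_tendstoInDistribution h isOpen_interior).trans
        (liminf_le_liminf ?_)
      filter_upwards [hs.mem n] with i hi
      exact measure_mono fun ω hω => interior_subset hω i hi

end ConvergenceInDistribution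

section Conditioning

open ProbabilityTheory Topology

theorem cond_congr_set {Ω : Type*} [MeasurableSpace Ω] {μ : Measure Ω} {s t : Set Ω}
    (h : s =ᵐ[μ] t) : μ[|s] = μ[|t] := by
  simp only [ProbabilityTheory.cond, measure_congr h, Measure.restrict_congr_set h]

theorem integral_cond_eq_div {Ω : Type*} [MeasurableSpace Ω] (μ : Measure Ω) (s : Set Ω)
    (f : Ω → ℝ) : ∫ ω, f ω ∂μ[|s] = (∫ ω in s, f ω ∂μ) / μ.real s := by
  rw [ProbabilityTheory.cond, integral_smul_measure, ENNReal.toReal_inv, smul_eq_mul,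
    div_eq_inv_mul, Measure.real]

theorem cond_real_apply_eq_div {Ω : Type*} [MeasurableSpace Ω] (μ : Measure Ω) {s : Set Ω}
    (hs : MeasurableSet s) (t : Set Ω) : μ[|s].real t = μ.real (t ∩ s) / μ.real s := by
  rw [Measure.real, cond_apply hs, ENNReal.toReal_mul, ENNReal.toReal_inv, inter_comm,
    div_eq_inv_mul, Measure.real, Measure.real]

theorem frontier_inter_subset_inter_frontier_union {E : Type*} [TopologicalSpace E] (s t : Set E) :
    frontier (s ∩ t) ⊆ (t ∩ frontier s) ∪ frontier t := by
  intro x hx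
  by_cases hxt : x ∈ frontier t
  · exact Or.inr hxt
  · rcases frontier_inter_subset s t hx with hxs | hxs
    · exact Or.inl ⟨by_contra fun hn => hxt ⟨hxs.2, fun hi => hn (interior_subset hi)⟩, hxs.1⟩
    · exact absurd hxs.2 hxt

theorem tendstoInDistribution_cond {κ Ω E : Type*} [MeasurableSpace Ω] {P : Measure Ω}
    [TopologicalSpace E] [TopologicalSpace.PseudoMetrizableSpace E]
    [MeasurableSpace E] [OpensMeasurableSpace E]
    {l : Filter κ} [l.IsCountablyGenerated] {Z : κ → Ω → E} (hZ : ∀ i, Measurable (Z i))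
    {A : κ → Set Ω} {ν : Measure E} {S : Set E} (hS : MeasurableSet S) (hSfr : ν (frontier S) = 0)
    (hA : ∀ i, A i =ᵐ[P] Z i ⁻¹' S) [∀ i, IsProbabilityMeasure P[|A i]] [IsProbabilityMeasure ν[|S]]
    {c : κ → ℝ}
    (hconv : ∀ B ⊆ S, MeasurableSet B → ν (frontier B) = 0 →
      Tendsto (fun i => c i * P.real (Z i ⁻¹' B)) l (𝓝 (ν.real B))) :
    TendstoInDistribution Z l id (fun i => P[|A i]) ν[|S] := by
  have hν : ν S ≠ ⊤ ∧ ν S ≠ 0 := not_or.1 fun h0 =>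
    IsProbabilityMeasure.ne_zero ν[|S] (cond_eq_zero.2 h0)
  have hνS : ν.real S ≠ 0 := ENNReal.toReal_ne_zero.2 hν.symm
  have hlimS := hconv S subset_rfl hS hSfr
  have (i : κ) : IsProbabilityMeasure (P[|A i].map (Z i)) :=
    Measure.isProbabilityMeasure_map (hZ i).aemeasurable
  have hcont : ∀ {B : Set E}, MeasurableSet B → ν[|S] (frontier B) = 0 →
      Tendsto (fun i => P[|A i].map (Z i) B) l (𝓝 (ν[|S] B)) := by
    intro B hB hBfr
    have hBSfr : ν (frontier (B ∩ S)) = 0 := by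
      refine measure_mono_null (frontier_inter_subset_inter_frontier_union B S)
        (measure_union_null ?_ hSfr)
      rw [cond_apply hS] at hBfr
      exact (mul_eq_zero.1 hBfr).resolve_left (ENNReal.inv_ne_zero.2 hν.1)
    rw [← ENNReal.tendsto_toReal_iff (fun _ => measure_ne_top _ _) (measure_ne_top _ _)]
    change Tendsto (fun i => (P[|A i].map (Z i)).real B) l (𝓝 (ν[|S].real B))
    rw [cond_real_apply_eq_div ν hS]
    refine ((hconv _ inter_subset_right (hB.inter hS) hBSfr).div hlimS hνS).congr' ?_
    filter_upwards [hlimS.eventually_ne hνS] with i hi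
    simp only [Pi.div_apply]
    rw [mul_div_mul_left _ _ (left_ne_zero_of_mul hi), map_measureReal_apply (hZ i) hB,
      cond_congr_set (hA i), cond_real_apply_eq_div P (hZ i hS), preimage_inter]
  refine tendstoInDistribution_of_forall_isOpen_le_liminf (fun i => (hZ i).aemeasurable)
    aemeasurable_id fun G hG => ?_
  simpa only [preimage_id, Measure.map_apply (hZ _) hG.measurableSet] using
    le_liminf_measure_open_of_forall_tendsto_measure hcont G hG

end Conditioning
section Quantile

open ProbabilityTheory Topology

/-- The `p`-quantile of `μ`, the generalized inverse of its distribution function. It is meaningful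
only for `0 < p < 1`; elsewhere `sInf` may return the junk value `0`. -/
noncomputable def quantile (μ : Measure ℝ) (p : ℝ) : ℝ :=
  sInf {x | p ≤ cdf μ x}

variable {μ : Measure ℝ} {p : ℝ}

theorem quantile_le_iff (hp : p ∈ Ioo 0 1) {x : ℝ} : quantile μ p ≤ x ↔ p ≤ cdf μ x := by
  obtain ⟨l, hl⟩ := ((tendsto_cdf_atBot μ).eventually_lt_const hp.1).exists
  obtain ⟨u, hu⟩ := ((tendsto_cdf_atTop μ).eventually_const_lt hp.2).exists
  have hbdd : BddBelow {x | p ≤ cdf μ x} :=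
    ⟨l, fun y hy => le_of_not_gt fun hyl => (hl.trans_le hy).not_ge (monotone_cdf μ hyl.le)⟩
  refine ⟨fun hx => ?_, fun hx => csInf_le hbdd hx⟩
  have hright : Tendsto (cdf μ) (𝓝[>] x) (𝓝 (cdf μ x)) :=
    ((cdf μ).right_continuous x).mono_left (nhdsWithin_mono x Ioi_subset_Ici_self)
  refine ge_of_tendsto hright ?_
  filter_upwards [self_mem_nhdsWithin] with y hxy
  obtain ⟨z, hz, hzy⟩ := exists_lt_of_csInf_lt ⟨u, hu.le⟩ (lt_of_le_of_lt hx hxy)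
  exact le_trans hz (monotone_cdf μ hzy.le)

theorem monotoneOn_quantile (μ : Measure ℝ) : MonotoneOn (quantile μ) (Ioo 0 1) :=
  fun _ hp _ hq hpq => (quantile_le_iff hp).2 (hpq.trans ((quantile_le_iff hq).1 le_rfl))

theorem cdf_quantile (hμ : Continuous (cdf μ)) (hp : p ∈ Ioo 0 1) : cdf μ (quantile μ p) = p := by
  refine le_antisymm (le_of_not_gt fun hlt => ?_) ((quantile_le_iff hp).1 le_rfl)
  obtain ⟨y, hpy, hy⟩ := ((hμ.continuousAt.eventually_const_lt hlt).filter_mono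
    nhdsWithin_le_nhds |>.and (eventually_mem_nhdsWithin (s := Iio (quantile μ p)))).exists
  exact ((quantile_le_iff hp).2 hpy.le).not_gt hy

theorem measure_eq_zero_of_forall_measure_Icc {α : Type*} [ConditionallyCompleteLinearOrder α]
    [TopologicalSpace α] [OrderTopology α] [MeasurableSpace α] {ν : Measure α} [ν.InnerRegular]
    {s : Set α} (hs : MeasurableSet s) (h : ∀ x ∈ s, ∀ y ∈ s, ν (Icc x y) = 0) : ν s = 0 := by
  rw [hs.measure_eq_iSup_isCompact, ← nonpos_iff_eq_zero]
  refine iSup₂_le fun K hKs => iSup_le fun hK => ?_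
  rcases K.eq_empty_or_nonempty with rfl | hne
  · exact measure_empty.le
  · exact (measure_mono (subset_Icc_csInf_csSup hK.bddBelow hK.bddAbove)).trans
      (h _ (hKs (hK.sInf_mem hne)) _ (hKs (hK.sSup_mem hne))).le

variable [IsProbabilityMeasure μ]

theorem ae_cdf_ne (hμ : Continuous (cdf μ)) (c : ℝ) : ∀ᵐ x ∂μ, cdf μ x ≠ c := by
  refine ae_iff.2 (measure_eq_zero_of_forall_measure_Icc ?_ fun x hx y hy => ?_)
  · simpa only [not_not] using! hμ.measurable (measurableSet_singleton c)
  · rw [← measure_cdf μ, StieltjesFunction.measure_Icc,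
      hμ.continuousAt.continuousWithinAt.leftLim_eq, not_not.1 hx, not_not.1 hy, sub_self,
      ENNReal.ofReal_zero]

theorem ae_cdf_mem_Ioo (hμ : Continuous (cdf μ)) : ∀ᵐ x ∂μ, cdf μ x ∈ Ioo 0 1 := by
  filter_upwards [ae_cdf_ne hμ 0, ae_cdf_ne hμ 1] with x h0 h1
  exact ⟨(cdf_nonneg μ x).lt_of_ne' h0, (cdf_le_one μ x).lt_of_ne h1⟩

theorem ae_cdf_lt_iff (hμ : Continuous (cdf μ)) (q : ℝ) :
    ∀ᵐ x ∂μ, cdf μ q < cdf μ x ↔ q < x := by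
  filter_upwards [ae_cdf_ne hμ (cdf μ q)] with x hx
  exact ⟨(monotone_cdf μ).reflect_lt, fun hqx => (monotone_cdf μ hqx.le).lt_of_ne' hx⟩

theorem ae_quantile_cdf (hμ : Continuous (cdf μ)) : ∀ᵐ x ∂μ, quantile μ (cdf μ x) = x := by
  filter_upwards [ae_cdf_mem_Ioo hμ, ae_all_iff.2 fun q : ℚ => ae_cdf_lt_iff hμ q] with x hx hlt
  refine ((quantile_le_iff hx).2 le_rfl).antisymm (le_of_not_gt fun h => ?_)
  obtain ⟨q, hq, hqx⟩ := exists_rat_btwn h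
  exact ((hlt q).2 hqx).not_ge ((quantile_le_iff hx).1 hq.le)

end Quantile

section Pareto

open ProbabilityTheory Topology

/-- The unit Pareto standardization `x ↦ 1 / (1 - F x)`, where `F` is the distribution function of
`μ`. Since division by zero returns `0`, it takes the value `0` where `F x = 1`. -/
noncomputable def unitPareto (μ : Measure ℝ) (x : ℝ) : ℝ :=
  1 / (1 - cdf μ x)

/-- The tail quantile function `t ↦ inf {x | F x ≥ 1 - 1 / t}`, where `F` is the distribution
function of `μ`. It is meaningful only for `1 < t`. -/
noncomputable def tailQuantile (μ : Measure ℝ) (t : ℝ) : ℝ :=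
  quantile μ (1 - 1 / t)

variable {μ : Measure ℝ} {t : ℝ}

theorem unitPareto_nonneg (μ : Measure ℝ) (x : ℝ) : 0 ≤ unitPareto μ x :=
  one_div_nonneg.2 (sub_nonneg.2 (cdf_le_one μ x))

theorem measurable_unitPareto (μ : Measure ℝ) : Measurable (unitPareto μ) :=
  ((monotone_cdf μ).measurable.const_sub 1).const_div 1

theorem one_sub_one_div_mem_Ioo (ht : 1 < t) : 1 - 1 / t ∈ Ioo 0 1 :=
  ⟨sub_pos.2 ((div_lt_one (zero_lt_one.trans ht)).2 ht),
    sub_lt_self 1 (one_div_pos.2 (zero_lt_one.trans ht))⟩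

theorem monotoneOn_tailQuantile (μ : Measure ℝ) : MonotoneOn (tailQuantile μ) (Ioi 1) :=
  fun _ hs _ ht hst => monotoneOn_quantile μ (one_sub_one_div_mem_Ioo hs)
    (one_sub_one_div_mem_Ioo ht)
    (sub_le_sub_left (one_div_le_one_div_of_le (zero_lt_one.trans hs) hst) 1)

variable [IsProbabilityMeasure μ]

theorem ae_tailQuantile_unitPareto (hμ : Continuous (cdf μ)) :
    ∀ᵐ x ∂μ, tailQuantile μ (unitPareto μ x) = x := by
  filter_upwards [ae_quantile_cdf hμ] with x hx
  rw [tailQuantile, unitPareto, one_div_one_div, sub_sub_cancel, hx]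

theorem ae_tailQuantile_lt_iff (hμ : Continuous (cdf μ)) (ht : 1 < t) :
    ∀ᵐ x ∂μ, tailQuantile μ t < x ↔ t < unitPareto μ x := by
  filter_upwards [ae_cdf_lt_iff hμ (tailQuantile μ t), ae_cdf_mem_Ioo hμ] with x hx hx1
  rw [← hx, tailQuantile, cdf_quantile hμ (one_sub_one_div_mem_Ioo ht), unitPareto,
    lt_one_div (zero_lt_one.trans ht) (sub_pos.2 hx1.2), sub_lt_comm]

theorem measure_Ioi_tailQuantile_ne_zero (hμ : Continuous (cdf μ)) (ht : 1 < t) :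
    μ (Ioi (tailQuantile μ t)) ≠ 0 := by
  have hreal : μ.real (Ioi (tailQuantile μ t)) = 1 / t := by
    rw [← compl_Iic, probReal_compl_eq_one_sub measurableSet_Iic, ← cdf_eq_real, tailQuantile,
      cdf_quantile hμ (one_sub_one_div_mem_Ioo ht), sub_sub_cancel]
  exact fun h0 => (one_div_pos.2 (zero_lt_one.trans ht)).ne' <| by
    rw [← hreal, Measure.real, h0, ENNReal.toReal_zero]

end Pareto

section ExtremeValueCondition

open Topology

theorem tendsto_uncurry_of_monotoneOn {κ α β : Type*} [LinearOrder α] [TopologicalSpace α]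
    [OrderTopology α] [DenselyOrdered α] [NoMinOrder α] [NoMaxOrder α]
    [LinearOrder β] [TopologicalSpace β] [OrderTopology β]
    {l : Filter κ} {f : κ → α → β} {g : α → β} {s : Set α} {x : α} (hs : ∀ᶠ y in 𝓝 x, y ∈ s)
    (hmono : ∀ᶠ i in l, MonotoneOn (f i) s) (hlim : ∀ y ∈ s, Tendsto (f · y) l (𝓝 (g y)))
    (hg : ContinuousAt g x) :
    Tendsto (fun p : κ × α => f p.1 p.2) (l ×ˢ 𝓝 x) (𝓝 (g x)) := by
  refine tendsto_order.2 ⟨fun c hc => ?_, fun c hc => ?_⟩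
  · obtain ⟨y, ⟨hys, hcy⟩, hyx⟩ := (((hs.and (hg.eventually_const_lt hc)).filter_mono
      nhdsWithin_le_nhds).and (eventually_mem_nhdsWithin (s := Iio x))).exists
    filter_upwards [(hmono.and ((hlim y hys).eventually_const_lt hcy)).prod_mk
      (hs.and (eventually_gt_nhds hyx))] with p ⟨⟨hp, hcp⟩, hps, hyp⟩
    exact hcp.trans_le (hp hys hps hyp.le)
  · obtain ⟨y, ⟨hys, hyc⟩, hxy⟩ := (((hs.and (hg.eventually_lt_const hc)).filter_mono
      nhdsWithin_le_nhds).and (eventually_mem_nhdsWithin (s := Ioi x))).exists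
    filter_upwards [(hmono.and ((hlim y hys).eventually_lt_const hyc)).prod_mk
      (hs.and (eventually_lt_nhds hxy))] with p ⟨⟨hp, hpc⟩, hps, hpy⟩
    exact (hp hps hys hpy.le).trans_lt hpc

/-- The functions `y ↦ (b (t y) - b t) / a t` are monotone, so their pointwise convergence to a
continuous limit is locally uniform. -/
theorem tendsto_uncurry_div_of_monotoneOn {a b g : ℝ → ℝ} (hb : MonotoneOn b (Ioi 1))
    (ha : ∀ᶠ t in atTop, 0 < a t)
    (hlim : ∀ y, 0 < y → Tendsto (fun t => (b (t * y) - b t) / a t) atTop (𝓝 (g y)))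
    {y : ℝ} (hy : 0 < y) (hg : ContinuousAt g y) :
    Tendsto (fun p : ℝ × ℝ => (b (p.1 * p.2) - b p.1) / a p.1) (atTop ×ˢ 𝓝 y) (𝓝 (g y)) := by
  refine tendsto_uncurry_of_monotoneOn (f := fun t y => (b (t * y) - b t) / a t)
    (eventually_gt_nhds (half_lt_self hy)) ?_ (fun z hz => hlim z ((half_pos hy).trans hz)) hg
  filter_upwards [ha, eventually_gt_atTop 0,
    tendsto_id.atTop_mul_const (half_pos hy) |>.eventually_gt_atTop 1] with t hat ht hty
  have hmem : ∀ z ∈ Ioi (y / 2), t * z ∈ Ioi 1 := fun z hz =>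
    lt_trans hty (mul_lt_mul_of_pos_left hz ht)
  intro u hu v hv huv
  have hbuv : b (t * u) ≤ b (t * v) :=
    hb (hmem u hu) (hmem v hv) (mul_le_mul_of_nonneg_left huv ht.le)
  exact div_le_div_of_nonneg_right (sub_le_sub_right hbuv _) hat.le

/-- The vector `((b_j(t x_j) - b_j(t)) / a_j(t))_j` of the extreme-value condition. -/
noncomputable def normalizedIncrement {ι : Type*} (b a : ι → ℝ → ℝ) (t : ℝ) (x : ι → ℝ)
    (j : ι) : ℝ :=
  (b j (t * x j) - b j t) / a j t

theorem tendsto_uncurry_normalizedIncrement {ι : Type*} {a b g : ι → ℝ → ℝ}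
    (hb : ∀ j, MonotoneOn (b j) (Ioi 1)) (ha : ∀ j, ∀ᶠ t in atTop, 0 < a j t)
    (hlim : ∀ j y, 0 < y → Tendsto (fun t => (b j (t * y) - b j t) / a j t) atTop (𝓝 (g j y)))
    (hg : ∀ j, ContinuousOn (g j) (Ioi 0)) {x : ι → ℝ} (hx : ∀ j, 0 < x j)
    {κ : Type*} {l : Filter κ} {u : κ → ℝ} (hu : Tendsto u l atTop) :
    Tendsto (fun p : κ × (ι → ℝ) => normalizedIncrement b a (u p.1) p.2) (l ×ˢ 𝓝 x)
      (𝓝 fun j => g j (x j)) := by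
  refine tendsto_pi_nhds.2 fun j => ?_
  have hproj : Tendsto (fun p : κ × (ι → ℝ) => (u p.1, p.2 j)) (l ×ˢ 𝓝 x) (atTop ×ˢ 𝓝 (x j)) :=
    (hu.comp tendsto_fst).prodMk (((continuous_apply j).tendsto x).comp tendsto_snd)
  exact (tendsto_uncurry_div_of_monotoneOn (hb j) (ha j) (hlim j) (hx j)
    ((hg j).continuousAt (Ioi_mem_nhds (hx j)))).comp hproj

/-- The limit `(y ^ ξ - 1) / ξ` of the normalized increments in the extreme-value condition, read as
`log y` for `ξ = 0`. -/
noncomputable def boxCox (ξ y : ℝ) : ℝ :=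
  if ξ = 0 then Real.log y else (y ^ ξ - 1) / ξ

theorem continuousOn_boxCox (ξ : ℝ) : ContinuousOn (boxCox ξ) (Ioi 0) := by
  have hne : ∀ y ∈ Ioi (0 : ℝ), y ≠ 0 := fun _ hy => (mem_Ioi.1 hy).ne'
  unfold boxCox
  split_ifs
  · exact Real.continuousOn_log.mono hne
  · exact ((continuousOn_id.rpow_const fun y hy => Or.inl (hne y hy)).sub
      continuousOn_const).div_const ξ

end ExtremeValueCondition

section RegularVariation

open ProbabilityTheory Topology

variable {ι Ω : Type*} [MeasurableSpace Ω] {P : Measure Ω} {X : Ω → ι → ℝ} {t : ℝ}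

/-- The law of the `j`-th coordinate of the random vector `X`. -/
noncomputable abbrev marginal (P : Measure Ω) (X : Ω → ι → ℝ) (j : ι) : Measure ℝ :=
  P.map fun ω => X ω j

/-- The random vector `V = (1 / (1 - F_j(X_j)))_j`, whose margins are unit Pareto when those of `X`
are continuous. -/
noncomputable def paretoVector (P : Measure Ω) (X : Ω → ι → ℝ) (ω : Ω) (j : ι) : ℝ :=
  unitPareto (marginal P X j) (X ω j)

/-- The event `X ≰ b(t)`, where `b_j` is the tail quantile function of `X_j`. -/
def exceedanceEvent (P : Measure Ω) (X : Ω → ι → ℝ) (t : ℝ) : Set Ω :=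
  {ω | ∃ j, tailQuantile (marginal P X j) t < X ω j}

/-- The region `𝕃₁` of nonnegative vectors with at least one coordinate exceeding `1`. -/
def exceedanceRegion (ι : Type*) : Set (ι → ℝ) :=
  {x | (∀ j, 0 ≤ x j) ∧ ∃ j, 1 < x j}

/-- The normalized excess `((X_j - b_j(t)) / a_j(t))_j` over the tail quantiles `b_j(t)`. -/
noncomputable def normalizedExcess (P : Measure Ω) (X : Ω → ι → ℝ) (a : ι → ℝ → ℝ) (t : ℝ) (ω : Ω)
    (j : ι) : ℝ :=
  (X ω j - tailQuantile (marginal P X j) t) / a j t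

theorem measurableSet_exceedanceRegion [Countable ι] : MeasurableSet (exceedanceRegion ι) := by
  simp only [exceedanceRegion, ofPred_and, ofPred_forall, ofPred_exists]
  exact (MeasurableSet.iInter fun j => measurableSet_le measurable_const
    (measurable_pi_apply j)).inter
    (MeasurableSet.iUnion fun j => measurableSet_lt measurable_const (measurable_pi_apply j))

theorem exceedanceRegion_subset : exceedanceRegion ι ⊆ {x | ∀ j, 0 ≤ x j} \ {0} := by
  rintro x ⟨hx, j, hj⟩
  refine ⟨hx, fun h0 => hj.not_ge ?_⟩
  rw [mem_singleton_iff.1 h0]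
  exact zero_le_one

theorem zero_notMem_closure_of_subset_exceedanceRegion [Finite ι] {B : Set (ι → ℝ)}
    (hB : B ⊆ exceedanceRegion ι) : 0 ∉ closure B := by
  have hclosed : IsClosed (⋃ j, {x : ι → ℝ | 1 ≤ x j}) :=
    isClosed_iUnion_of_finite fun j => isClosed_le continuous_const (continuous_apply j)
  have hsub : B ⊆ ⋃ j, {x : ι → ℝ | 1 ≤ x j} :=
    fun x hx => mem_iUnion.2 ((hB hx).2.imp fun _ => le_of_lt)
  intro h0
  obtain ⟨_, hj⟩ := mem_iUnion.1 (closure_minimal hsub hclosed h0)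
  exact zero_lt_one.not_ge (show (1 : ℝ) ≤ 0 from hj)

theorem measurable_paretoVector (hX : Measurable X) : Measurable (paretoVector P X) :=
  measurable_pi_iff.2 fun j =>
    (measurable_unitPareto _).comp (measurable_pi_iff.1 hX j)

theorem measurable_normalizedExcess (hX : Measurable X) (a : ι → ℝ → ℝ) (t : ℝ) :
    Measurable (normalizedExcess P X a t) :=
  measurable_pi_iff.2 fun j => ((measurable_pi_iff.1 hX j).sub_const _).div_const _

variable [IsProbabilityMeasure P]

theorem isProbabilityMeasure_marginal (hX : Measurable X) (j : ι) :
    IsProbabilityMeasure (marginal P X j) :=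
  Measure.isProbabilityMeasure_map (measurable_pi_iff.1 hX j).aemeasurable

theorem cdf_marginal (hX : Measurable X) (j : ι) (x : ℝ) :
    cdf (marginal P X j) x = P.real {ω | X ω j ≤ x} := by
  have := isProbabilityMeasure_marginal (P := P) hX
  rw [cdf_eq_real, map_measureReal_apply (measurable_pi_iff.1 hX j) measurableSet_Iic]
  rfl

theorem ae_tailQuantile_paretoVector [Countable ι] (hX : Measurable X)
    (hcont : ∀ j, Continuous (cdf (marginal P X j))) :
    ∀ᵐ ω ∂P, ∀ j, tailQuantile (marginal P X j) (paretoVector P X ω j) = X ω j := by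
  have := isProbabilityMeasure_marginal (P := P) hX
  exact ae_all_iff.2 fun j => ae_of_ae_map (measurable_pi_iff.1 hX j).aemeasurable
    (ae_tailQuantile_unitPareto (hcont j))

theorem normalizedIncrement_paretoVector_ae_eq [Countable ι] (hX : Measurable X)
    (hcont : ∀ j, Continuous (cdf (marginal P X j))) (a : ι → ℝ → ℝ) (ht : t ≠ 0) :
    (fun ω => normalizedIncrement (fun j => tailQuantile (marginal P X j)) a t
      (t⁻¹ • paretoVector P X ω)) =ᵐ[P] normalizedExcess P X a t := by
  filter_upwards [ae_tailQuantile_paretoVector hX hcont] with ω hω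
  funext j
  simp only [normalizedIncrement, normalizedExcess, Pi.smul_apply, smul_eq_mul,
    mul_inv_cancel_left₀ ht, hω]

theorem exceedanceEvent_ae_eq_preimage [Countable ι] (hX : Measurable X)
    (hcont : ∀ j, Continuous (cdf (marginal P X j))) (ht : 1 < t) :
    exceedanceEvent P X t =ᵐ[P] (fun ω => t⁻¹ • paretoVector P X ω) ⁻¹' exceedanceRegion ι := by
  have := isProbabilityMeasure_marginal (P := P) hX
  have ht0 : 0 < t := zero_lt_one.trans ht
  have hlt : ∀ᵐ ω ∂P, ∀ j, tailQuantile (marginal P X j) t < X ω j ↔ t < paretoVector P X ω j :=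
    ae_all_iff.2 fun j => ae_of_ae_map (measurable_pi_iff.1 hX j).aemeasurable
      (ae_tailQuantile_lt_iff (hcont j) ht)
  refine eventuallyEq_set.2 ?_
  filter_upwards [hlt] with ω hω
  have hnonneg : ∀ j, 0 ≤ t⁻¹ * paretoVector P X ω j := fun j =>
    mul_nonneg (inv_nonneg.2 ht0.le) (unitPareto_nonneg _ _)
  simp only [exceedanceEvent, exceedanceRegion, mem_ofPred_eq, mem_preimage, Pi.smul_apply,
    smul_eq_mul, hω, lt_inv_mul_iff₀ ht0, mul_one, hnonneg, implies_true, true_and]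

theorem measure_exceedanceEvent_ne_zero [Nonempty ι] (hX : Measurable X)
    (hcont : ∀ j, Continuous (cdf (marginal P X j))) (ht : 1 < t) :
    P (exceedanceEvent P X t) ≠ 0 := by
  have := isProbabilityMeasure_marginal (P := P) hX
  intro h0
  let j := Classical.arbitrary ι
  refine measure_Ioi_tailQuantile_ne_zero (hcont j) ht ?_
  rw [Measure.map_apply (measurable_pi_iff.1 hX j) measurableSet_Ioi]
  exact measure_mono_null (fun ω (hω : tailQuantile _ t < X ω j) =>
    show ω ∈ exceedanceEvent P X t from ⟨j, hω⟩) h0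

variable {ν : Measure (ι → ℝ)}

theorem ae_cond_exceedanceRegion_pos [Countable ι]
    (hzero : ν {x ∈ exceedanceRegion ι | ∃ j, x j = 0} = 0) :
    ∀ᵐ x ∂ν[|exceedanceRegion ι], ∀ j, 0 < x j := by
  filter_upwards [ae_cond_mem measurableSet_exceedanceRegion,
    cond_absolutelyContinuous.ae_le (measure_eq_zero_iff_ae_notMem.1 hzero)] with x hx hx0 j
  exact (hx.1 j).lt_of_ne' fun h0 => hx0 ⟨hx, j, h0⟩

theorem tendstoInDistribution_paretoVector_cond [Countable ι] (hX : Measurable X)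
    (hcont : ∀ j, Continuous (cdf (marginal P X j)))
    [∀ t : Ioi (1 : ℝ), IsProbabilityMeasure P[|exceedanceEvent P X t]]
    [IsProbabilityMeasure ν[|exceedanceRegion ι]]
    (hbd : ν (frontier (exceedanceRegion ι)) = 0)
    (hconv : ∀ B ⊆ exceedanceRegion ι, MeasurableSet B → ν (frontier B) = 0 →
      Tendsto (fun t : ℝ => t * P.real {ω | t⁻¹ • paretoVector P X ω ∈ B}) atTop
        (𝓝 (ν.real B))) :
    TendstoInDistribution (fun (t : Ioi (1 : ℝ)) ω => t.1⁻¹ • paretoVector P X ω) atTop id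
      (fun t => P[|exceedanceEvent P X t]) ν[|exceedanceRegion ι] := by
  have hZ (t : Ioi (1 : ℝ)) : Measurable fun ω => t.1⁻¹ • paretoVector P X ω :=
    (measurable_paretoVector hX).const_smul t.1⁻¹
  have hA (t : Ioi (1 : ℝ)) := exceedanceEvent_ae_eq_preimage hX hcont t.2
  refine tendstoInDistribution_cond (c := Subtype.val) hZ measurableSet_exceedanceRegion hbd hA ?_
  exact fun B hBL hB hBfr => tendsto_comp_val_Ioi_atTop.2 (hconv B hBL hB hBfr)

theorem aemeasurable_comp_of_ae_pos [Countable ι] {μ : Measure (ι → ℝ)}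
    (hμ : ∀ᵐ x ∂μ, ∀ j, 0 < x j) {g : ι → ℝ → ℝ} (hg : ∀ j, ContinuousOn (g j) (Ioi 0)) :
    AEMeasurable (fun x j => g j (x j)) μ := by
  refine aemeasurable_pi_iff.2 fun j => ⟨fun x => (Ioi 0).indicator (g j) (x j), ?_, ?_⟩
  · have hind : Measurable ((Ioi 0).indicator (g j)) := by
      rw [← piecewise_eq_indicator]
      exact (hg j).measurable_piecewise continuousOn_const measurableSet_Ioi
    exact hind.comp (measurable_pi_apply j)
  · filter_upwards [hμ] with x hx
    exact (indicator_of_mem (hx j) _).symm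

theorem tendstoInDistribution_normalizedExcess [Finite ι] (hX : Measurable X)
    (hcont : ∀ j, Continuous (cdf (marginal P X j)))
    [∀ t : Ioi (1 : ℝ), IsProbabilityMeasure P[|exceedanceEvent P X t]]
    [IsProbabilityMeasure ν[|exceedanceRegion ι]]
    (hbd : ν (frontier (exceedanceRegion ι)) = 0)
    (hconv : ∀ B ⊆ exceedanceRegion ι, MeasurableSet B → ν (frontier B) = 0 →
      Tendsto (fun t : ℝ => t * P.real {ω | t⁻¹ • paretoVector P X ω ∈ B}) atTop (𝓝 (ν.real B)))
    (hzero : ν {x ∈ exceedanceRegion ι | ∃ j, x j = 0} = 0)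
    {g : ι → ℝ → ℝ} (hg : ∀ j, ContinuousOn (g j) (Ioi 0))
    {a : ι → ℝ → ℝ} (ha : ∀ j, ∀ᶠ t in atTop, 0 < a j t)
    (hmarg : ∀ j y, 0 < y → Tendsto (fun t => (tailQuantile (marginal P X j) (t * y) -
      tailQuantile (marginal P X j) t) / a j t) atTop (𝓝 (g j y))) :
    TendstoInDistribution (fun t : Ioi (1 : ℝ) => normalizedExcess P X a t) atTop
      (fun x j => g j (x j)) (fun t => P[|exceedanceEvent P X t]) ν[|exceedanceRegion ι] := by
  have := Fintype.ofFinite ι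
  let b (j : ι) : ℝ → ℝ := tailQuantile (marginal P X j)
  have hφV (t : Ioi (1 : ℝ)) : (fun ω => normalizedIncrement b a t (t.1⁻¹ • paretoVector P X ω))
      =ᵐ[P[|exceedanceEvent P X t]] normalizedExcess P X a t :=
    cond_absolutelyContinuous.ae_le (normalizedIncrement_paretoVector_ae_eq hX hcont a
      (zero_lt_one.trans (mem_Ioi.1 t.2)).ne')
  have hpos := ae_cond_exceedanceRegion_pos hzero
  have hφ : ∀ᵐ x ∂ν[|exceedanceRegion ι], Tendsto
      (fun p : Ioi (1 : ℝ) × (ι → ℝ) => normalizedIncrement b a p.1 p.2) (atTop ×ˢ 𝓝 x)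
      (𝓝 fun j => g j (x j)) := by
    filter_upwards [hpos] with x hx
    exact tendsto_uncurry_normalizedIncrement (b := b) (fun _ => monotoneOn_tailQuantile _) ha
      hmarg hg hx (tendsto_comp_val_Ioi_atTop.2 tendsto_id)
  exact (tendstoInDistribution_of_tendsto_uncurry (g := fun (x : ι → ℝ) j => g j (x j))
    (tendstoInDistribution_paretoVector_cond hX hcont hbd hconv)
    (fun t => (measurable_normalizedExcess hX a t).aemeasurable.congr (hφV t).symm)
    (aemeasurable_comp_of_ae_pos hpos hg) hφ).congr hφV .rfl

theorem mgp_weak_convergence_general [Finite ι] (hX : Measurable X)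
    (hcont : ∀ j, Continuous (cdf (marginal P X j)))
    (hpos : ν (exceedanceRegion ι) ≠ 0) (hfin : ν (exceedanceRegion ι) ≠ ⊤)
    (hbd : ν (frontier (exceedanceRegion ι)) = 0)
    (hconv : ∀ B ⊆ exceedanceRegion ι, MeasurableSet B → ν (frontier B) = 0 →
      Tendsto (fun t : ℝ => t * P.real {ω | t⁻¹ • paretoVector P X ω ∈ B}) atTop (𝓝 (ν.real B)))
    (hzero : ν {x ∈ exceedanceRegion ι | ∃ j, x j = 0} = 0)
    {g : ι → ℝ → ℝ} (hg : ∀ j, ContinuousOn (g j) (Ioi 0))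
    {a : ι → ℝ → ℝ} (ha : ∀ j, ∀ᶠ t in atTop, 0 < a j t)
    (hmarg : ∀ j y, 0 < y → Tendsto (fun t => (tailQuantile (marginal P X j) (t * y) -
      tailQuantile (marginal P X j) t) / a j t) atTop (𝓝 (g j y)))
    (h : BoundedContinuousFunction (ι → ℝ) ℝ) :
    Tendsto (fun t => ∫ ω, h (normalizedExcess P X a t ω) ∂P[|exceedanceEvent P X t]) atTop
      (𝓝 (∫ x, h (fun j => g j (x j)) ∂ν[|exceedanceRegion ι])) := by
  obtain ⟨_, _, j, _⟩ := nonempty_of_measure_ne_zero hpos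
  have : Nonempty ι := ⟨j⟩
  have (t : Ioi (1 : ℝ)) : IsProbabilityMeasure P[|exceedanceEvent P X t] :=
    cond_isProbabilityMeasure (measure_exceedanceEvent_ne_zero hX hcont t.2)
  have : IsProbabilityMeasure ν[|exceedanceRegion ι] :=
    cond_isProbabilityMeasure_of_finite hpos hfin
  exact (tendsto_comp_val_Ioi_atTop (a := 1)).1 <| tendsto_integral_of_tendstoInDistribution
    (tendstoInDistribution_normalizedExcess hX hcont hbd hconv hzero hg ha hmarg) h

end RegularVariation

/-- Proposition 1, main part: under multivariate regular variation of the unit-Pareto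
standardized vector `V`, no mass of `ν` on the coordinate hyperplanes, and the marginal
extreme-value condition on the tail quantile functions `b_j`, the conditional law of
`((X_j - b_j(t))/a_j(t))_j` given `X ≰ b(t)` converges weakly to the law of
`((Y_j^{ξ_j} - 1)/ξ_j)_j` where `Y` has law `ν(· ∩ 𝕃₁)/ν(𝕃₁)`. -/
theorem mgp_weak_convergence
    {d : ℕ} {Ω : Type*} [MeasurableSpace Ω] (ℙ : Measure Ω) [IsProbabilityMeasure ℙ]
    (X : Ω → Fin d → ℝ) (hX : Measurable X)
    (F : Fin d → ℝ → ℝ)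
    (hFdef : ∀ j x, F j x = (ℙ {ω | X ω j ≤ x}).toReal)
    (hFcont : ∀ j, Continuous (F j))
    (V : Ω → Fin d → ℝ) (hVdef : ∀ ω j, V ω j = 1 / (1 - F j (X ω j)))
    (ν : Measure (Fin d → ℝ))
    -- (i) ν is finite on Borel subsets of E = [0,∞)^d \ {0} bounded away from 0 ...
    (hfin : ∀ B : Set (Fin d → ℝ), MeasurableSet B →
      B ⊆ {x | ∀ j, 0 ≤ x j} \ {0} → (0 : Fin d → ℝ) ∉ closure B → ν B < ⊤)
    -- ... and t·P(t⁻¹ V ∈ B) → ν(B) for ν-continuity sets B bounded away from 0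
    (hconv : ∀ B : Set (Fin d → ℝ), MeasurableSet B →
      B ⊆ {x | ∀ j, 0 ≤ x j} \ {0} → (0 : Fin d → ℝ) ∉ closure B → ν (frontier B) = 0 →
      Tendsto (fun t : ℝ => t * (ℙ {ω | t⁻¹ • V ω ∈ B}).toReal) atTop (nhds (ν B).toReal))
    (L1 : Set (Fin d → ℝ)) (hL1 : L1 = {x | (∀ j, 0 ≤ x j) ∧ ∃ j, 1 < x j})
    (hpos : 0 < ν L1) (hbd : ν (frontier L1) = 0)
    -- (ii) ν puts no mass on points of E with a vanishing coordinate
    (hzero : ν {x : Fin d → ℝ | (∀ j, 0 ≤ x j) ∧ x ≠ 0 ∧ ∃ j, x j = 0} = 0)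
    -- (iii) marginal extreme-value condition
    (ξ : Fin d → ℝ) (a : Fin d → ℝ → ℝ) (ha : ∀ j, ∀ t : ℝ, 1 < t → 0 < a j t)
    (b : Fin d → ℝ → ℝ) (hb : ∀ j t, b j t = sInf {x : ℝ | 1 - 1 / t ≤ F j x})
    (hmarg : ∀ j, ∀ y : ℝ, 0 < y →
      Tendsto (fun t : ℝ => (b j (t * y) - b j t) / a j t) atTop
        (nhds (if ξ j = 0 then Real.log y else (y ^ ξ j - 1) / ξ j))) :
    ∀ h : BoundedContinuousFunction (Fin d → ℝ) ℝ,
      Tendsto (fun t : ℝ =>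
          (∫ ω in {ω | ∃ j, b j t < X ω j},
              h (fun j => (X ω j - b j t) / a j t) ∂ℙ) /
            (ℙ {ω | ∃ j, b j t < X ω j}).toReal)
        atTop
        (nhds ((∫ x in L1,
            h (fun j => if ξ j = 0 then Real.log (x j) else (x j ^ ξ j - 1) / ξ j) ∂ν) /
          (ν L1).toReal)) := by
  have hFcdf (j : Fin d) : F j = ProbabilityTheory.cdf (marginal ℙ X j) :=
    funext fun x => (hFdef j x).trans (cdf_marginal hX j x).symm
  have hV : V = paretoVector ℙ X := funext₂ fun ω j => by rw [hVdef, hFcdf]; rfl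
  have hbq : b = fun j => tailQuantile (marginal ℙ X j) := funext₂ fun j t => by
    rw [hb, hFcdf]; rfl
  subst hV hbq hL1
  intro h
  have hlim := mgp_weak_convergence_general hX (fun j => hFcdf j ▸ hFcont j) hpos.ne'
    (hfin _ measurableSet_exceedanceRegion exceedanceRegion_subset
      (zero_notMem_closure_of_subset_exceedanceRegion subset_rfl)).ne hbd
    (fun B hBL hB => hconv B hB (hBL.trans exceedanceRegion_subset)
      (zero_notMem_closure_of_subset_exceedanceRegion hBL))
    (measure_mono_null (fun x ⟨hx, hx0⟩ => show _ ∧ _ ∧ _ from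
      ⟨hx.1, (exceedanceRegion_subset hx).2, hx0⟩) hzero)
    (fun j => continuousOn_boxCox (ξ j)) (fun j => (eventually_gt_atTop 1).mono (ha j)) hmarg h
  simp only [integral_cond_eq_div] at hlim
  exact hlim
end

section
/- Let Φ be a probability measure on the unit simplex Δ_{d-1}, and define the measure ν on Borel sets B ⊆ [0,∞)^d \ {0} by ν(B) = d·∫_{Δ_{d-1}} ∫_0^∞ 1_B(y·w) y^{-2} dy dΦ(w). Let Θ have law Φ and let Y be a unit-Pareto random variable independent of Θ. Then 0 < ν(𝕃₁) < ∞ and, for every Borel set B ⊆ [0,∞)^d, ν(B ∩ 𝕃₁)/ν(𝕃₁) = P(Y·Θ ∈ B | Y·Θ ∈ 𝕃₁). -/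
open MeasureTheory Filter Set
open scoped ENNReal

/-!
If `w ≤ 1` and `y > 0`, then `y • w ∈ 𝕃₁` forces `y > 1`, and on `(1, ∞)` the intensity `y⁻² dy` is
exactly the unit-Pareto law. Hence `ν(C) = d · P(Y·Θ ∈ C)` for every Borel `C ⊆ 𝕃₁`, and the factor
`d` cancels from the ratio. Positivity holds because a ray through `w ≥ 0` with `w j > 0` lies in
`𝕃₁` from radius `1 / w j` on, a set of radii of mass at least `w j > 0`.
-/

section RadialMeasure

open ProbabilityTheory

/-- The radial intensity `y⁻² dy` on `(0, ∞)` of an exponent measure, with the density written as in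
the definition of `ν`. -/
noncomputable def radialMeasure : Measure ℝ :=
  (volume.restrict (Ioi 0)).withDensity fun y => 1 / ENNReal.ofReal (y ^ 2)

instance : SFinite radialMeasure := by unfold radialMeasure; infer_instance

lemma one_div_ofReal_sq {y : ℝ} (hy : 0 < y) :
    1 / ENNReal.ofReal (y ^ 2) = ENNReal.ofReal (y ^ (-2 : ℝ)) := by
  rw [one_div, ← ENNReal.ofReal_inv_of_pos (by positivity), Real.rpow_neg hy.le, Real.rpow_two]

lemma radialMeasure_Ioi {a : ℝ} (ha : 0 < a) : radialMeasure (Ioi a) = ENNReal.ofReal (1 / a) := by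
  have rpow_nonneg : 0 ≤ᵐ[volume.restrict (Ioi a)] fun y : ℝ => y ^ (-2 : ℝ) :=
    (ae_restrict_mem measurableSet_Ioi).mono fun y hy => Real.rpow_nonneg (ha.trans hy).le _
  calc radialMeasure (Ioi a)
      = ∫⁻ y in Ioi a, 1 / ENNReal.ofReal (y ^ 2) := by
        rw [radialMeasure, withDensity_apply _ measurableSet_Ioi,
          Measure.restrict_restrict_of_subset (Ioi_subset_Ioi ha.le)]
    _ = ∫⁻ y in Ioi a, ENNReal.ofReal (y ^ (-2 : ℝ)) :=
        setLIntegral_congr_fun measurableSet_Ioi fun y hy => one_div_ofReal_sq (ha.trans hy)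
    _ = ENNReal.ofReal (∫ y in Ioi a, y ^ (-2 : ℝ)) :=
        (ofReal_integral_eq_lintegral_ofReal
          (integrableOn_Ioi_rpow_of_lt (by norm_num) ha) rpow_nonneg).symm
    _ = ENNReal.ofReal (1 / a) := by
        rw [integral_Ioi_rpow_of_lt (by norm_num) ha]
        norm_num [Real.rpow_neg_one]

lemma restrict_Ioi_one_radialMeasure :
    radialMeasure.restrict (Ioi 1) = paretoMeasure 1 1 := by
  have indicator_eq :
      (Ici 1).indicator (fun y : ℝ => 1 / ENNReal.ofReal (y ^ 2)) = paretoPDF 1 1 := by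
    ext y
    by_cases hy : 1 ≤ y
    · rw [indicator_of_mem (mem_Ici.2 hy), one_div_ofReal_sq (zero_lt_one.trans_le hy),
        paretoPDF_of_le hy]
      norm_num
    · rw [indicator_of_notMem (notMem_Ici.2 (not_le.1 hy)), paretoPDF_of_lt (not_le.1 hy)]
  rw [radialMeasure, restrict_withDensity measurableSet_Ioi,
    Measure.restrict_restrict_of_subset (Ioi_subset_Ioi zero_le_one),
    Measure.restrict_congr_set Ioi_ae_eq_Ici, ← withDensity_indicator measurableSet_Ici,
    indicator_eq, paretoMeasure]

lemma radialMeasure_eq_paretoMeasure {S : Set ℝ} (hS : MeasurableSet S)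
    (hS_sub : S ∩ Ioi 0 ⊆ Ioi 1) : radialMeasure S = paretoMeasure 1 1 S := by
  have inter_eq : S ∩ Ioi 0 = S ∩ Ioi 1 :=
    Subset.antisymm (subset_inter inter_subset_left hS_sub)
      (inter_subset_inter_right S (Ioi_subset_Ioi zero_le_one))
  rw [← restrict_Ioi_one_radialMeasure, Measure.restrict_apply hS, ← inter_eq, radialMeasure,
    withDensity_apply _ hS, withDensity_apply _ (hS.inter measurableSet_Ioi),
    Measure.restrict_restrict hS, Measure.restrict_restrict (hS.inter measurableSet_Ioi),
    inter_assoc, inter_self]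

lemma eq_of_measure_Ioi_eq_of_le {α : Type*} [TopologicalSpace α] [SecondCountableTopology α]
    [LinearOrder α] [OrderTopology α] [MeasurableSpace α] [BorelSpace α] {μ ν : Measure α}
    [IsProbabilityMeasure μ] [IsProbabilityMeasure ν] {t : α} (ht : μ (Ioi t) = 1)
    (h : ∀ a, t ≤ a → μ (Ioi a) = ν (Ioi a)) : μ = ν := by
  have measure_Ioi_of_le {ρ : Measure α} [IsProbabilityMeasure ρ] (hρ : ρ (Ioi t) = 1) {a : α}
      (hat : a ≤ t) : ρ (Ioi a) = 1 :=
    le_antisymm prob_le_one (hρ ▸ measure_mono (Ioi_subset_Ioi hat))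
  have measure_Ioi_eq (a : α) : μ (Ioi a) = ν (Ioi a) := by
    rcases le_total t a with hta | hat
    · exact h a hta
    · rw [measure_Ioi_of_le ht hat, measure_Ioi_of_le (h t le_rfl ▸ ht) hat]
  refine Measure.ext_of_Iic μ ν fun a => ?_
  rw [← compl_Ioi, prob_compl_eq_one_sub measurableSet_Ioi,
    prob_compl_eq_one_sub measurableSet_Ioi, measure_Ioi_eq]

lemma paretoMeasure_one_one_Ioi {a : ℝ} (ha : 1 ≤ a) :
    paretoMeasure 1 1 (Ioi a) = ENNReal.ofReal (1 / a) := by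
  rw [← restrict_Ioi_one_radialMeasure, Measure.restrict_apply measurableSet_Ioi,
    inter_eq_left.2 (Ioi_subset_Ioi ha), radialMeasure_Ioi (zero_lt_one.trans_le ha)]

lemma hasLaw_paretoMeasure_of_tail {Ω : Type*} [MeasurableSpace Ω] {P : Measure Ω}
    [IsProbabilityMeasure P] {Y : Ω → ℝ} (hY : AEMeasurable Y P)
    (htail : ∀ y : ℝ, 1 ≤ y → P.real {ω | y < Y ω} = 1 / y) :
    HasLaw Y (paretoMeasure 1 1) P := by
  have := isProbabilityMeasure_paretoMeasure one_pos one_pos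
  have := Measure.isProbabilityMeasure_map hY
  refine ⟨hY, (eq_of_measure_Ioi_eq_of_le (t := 1) ?_ fun a ha => ?_).symm⟩
  · rw [paretoMeasure_one_one_Ioi le_rfl, one_div_one, ENNReal.ofReal_one]
  · rw [paretoMeasure_one_one_Ioi ha, Measure.map_apply_of_aemeasurable hY measurableSet_Ioi,
      ← htail a ha, ofReal_measureReal]
    rfl

end RadialMeasure

section ExponentMeasure

open ProbabilityTheory

variable {E : Type*} [MeasurableSpace E] [SMul ℝ E]

/-- The exponent measure `ν(B) = c · ∫ ∫_0^∞ 1_B(y • w) y⁻² dy dΦ(w)` with spectral measure `Φ`,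
encoded as `c` times the image of `Φ ⊗ y⁻² dy` under `(w, y) ↦ y • w`. -/
noncomputable def exponentMeasure (c : ℝ≥0∞) (Φ : Measure E) : Measure E :=
  c • (Φ.prod radialMeasure).map fun p => p.2 • p.1

variable [MeasurableSMul₂ ℝ E] {c : ℝ≥0∞} {Φ : Measure E} {B : Set E}

lemma exponentMeasure_apply (hB : MeasurableSet B) :
    exponentMeasure c Φ B = c * ∫⁻ w, radialMeasure {y | y • w ∈ B} ∂Φ := by
  have smul_measurable : Measurable fun p : E × ℝ => p.2 • p.1 := by fun_prop
  rw [exponentMeasure, Measure.smul_apply, smul_eq_mul, Measure.map_apply smul_measurable hB,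
    Measure.prod_apply (smul_measurable hB)]
  rfl

lemma exponentMeasure_apply_eq_lintegral_indicator (hB : MeasurableSet B) :
    exponentMeasure c Φ B = c * ∫⁻ w, (∫⁻ y in Ioi (0 : ℝ),
      B.indicator (fun _ => (1 : ℝ≥0∞)) (y • w) / ENNReal.ofReal (y ^ 2)) ∂Φ := by
  rw [exponentMeasure_apply hB]
  congr 2 with w
  have slice_measurable : MeasurableSet {y : ℝ | y • w ∈ B} := measurable_id.smul_const w hB
  rw [radialMeasure, withDensity_apply _ slice_measurable, ← lintegral_indicator slice_measurable]
  congr 1 with y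
  by_cases hy : y • w ∈ B <;> simp [hy]

lemma measure_smul_mem_eq_lintegral {Ω : Type*} [MeasurableSpace Ω] {P : Measure Ω}
    [IsFiniteMeasure P] {μ : Measure ℝ} {Θ : Ω → E} {Y : Ω → ℝ} (hΘ : HasLaw Θ Φ P)
    (hY : HasLaw Y μ P) (hindep : IndepFun Y Θ P) (hB : MeasurableSet B) :
    P {ω | Y ω • Θ ω ∈ B} = ∫⁻ w, μ {y | y • w ∈ B} ∂Φ := by
  have : IsFiniteMeasure μ := hY.isFiniteMeasure_iff.1 inferInstance
  have smul_mem_measurable : MeasurableSet {p : E × ℝ | p.2 • p.1 ∈ B} :=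
    (measurable_snd.smul measurable_fst) hB
  rw [(hindep.symm.hasLaw_prod hΘ hY).measure_eq smul_mem_measurable,
    Measure.prod_apply smul_mem_measurable]
  rfl

end ExponentMeasure

section Exceedance

open ProbabilityTheory

variable {ι : Type*} {Φ : Measure (ι → ℝ)} {c : ℝ≥0∞}

lemma one_lt_of_smul_not_le_one {w : ι → ℝ} (hw : w ≤ 1) {y : ℝ} (hy : 0 ≤ y)
    (hyw : ¬y • w ≤ 1) : 1 < y := by
  contrapose! hyw
  exact fun j => (mul_le_of_le_one_right hy (hw j)).trans hyw

lemma Ioi_inv_subset_smul_mem_Ici_diff_Iic {w : ι → ℝ} (hw : 0 ≤ w) {j : ι} (hj : 0 < w j) :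
    Ioi (w j)⁻¹ ⊆ {y : ℝ | y • w ∈ Ici 0 \ Iic 1} := by
  intro y (hy : (w j)⁻¹ < y)
  refine ⟨smul_nonneg ((inv_pos.2 hj).trans hy).le hw, fun hyw => ?_⟩
  exact (hyw j).not_gt ((inv_lt_iff_one_lt_mul₀ hj).1 hy)

lemma radialMeasure_smul_mem_Ici_diff_Iic_pos {w : ι → ℝ} (hw : 0 < w) :
    0 < radialMeasure {y | y • w ∈ Ici 0 \ Iic 1} := by
  obtain ⟨hw_nonneg, j, hj⟩ := Pi.lt_def.1 hw
  calc 0 < ENNReal.ofReal (1 / (w j)⁻¹) := ENNReal.ofReal_pos.2 (one_div_pos.2 (inv_pos.2 hj))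
    _ = radialMeasure (Ioi (w j)⁻¹) := (radialMeasure_Ioi (inv_pos.2 hj)).symm
    _ ≤ radialMeasure {y | y • w ∈ Ici 0 \ Iic 1} :=
        measure_mono (Ioi_inv_subset_smul_mem_Ici_diff_Iic hw_nonneg hj)

variable [Countable ι]

lemma exponentMeasure_eq_mul_measure_smul_mem {Ω : Type*} [MeasurableSpace Ω] {P : Measure Ω}
    {Θ : Ω → ι → ℝ} {Y : Ω → ℝ} (hΘ : HasLaw Θ Φ P) (hY : HasLaw Y (paretoMeasure 1 1) P)
    (hindep : IndepFun Y Θ P) (hΦ : ∀ᵐ w ∂Φ, w ≤ 1) {C : Set (ι → ℝ)} (hC : MeasurableSet C)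
    (hC_sub : C ⊆ (Iic 1)ᶜ) : exponentMeasure c Φ C = c * P {ω | Y ω • Θ ω ∈ C} := by
  have := isProbabilityMeasure_paretoMeasure one_pos one_pos
  have := hY.isProbabilityMeasure
  rw [exponentMeasure_apply hC, measure_smul_mem_eq_lintegral hΘ hY hindep hC]
  congr 1
  refine lintegral_congr_ae (hΦ.mono fun w hw => ?_)
  exact radialMeasure_eq_paretoMeasure (measurable_id.smul_const w hC)
    fun y ⟨hyC, hy⟩ => one_lt_of_smul_not_le_one hw (le_of_lt hy) (hC_sub hyC)

lemma exponentMeasure_Ici_diff_Iic_pos (hc : c ≠ 0) (hΦ : ∃ᵐ w ∂Φ, 0 < w) :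
    0 < exponentMeasure c Φ (Ici 0 \ Iic 1) := by
  have smul_mem_measurable :
      MeasurableSet {p : (ι → ℝ) × ℝ | p.2 • p.1 ∈ Ici (0 : ι → ℝ) \ Iic 1} :=
    (measurable_snd.smul measurable_fst) (measurableSet_Ici.diff measurableSet_Iic)
  rw [exponentMeasure_apply (measurableSet_Ici.diff measurableSet_Iic)]
  refine ENNReal.mul_pos hc fun integral_eq_zero => hΦ ?_
  have slice_eq_zero := (lintegral_eq_zero_iff
    (measurable_measure_prodMk_left smul_mem_measurable)).1 integral_eq_zero
  exact slice_eq_zero.mono fun w hw hw_pos =>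
    (radialMeasure_smul_mem_Ici_diff_Iic_pos hw_pos).ne' hw

theorem exponent_measure_ratio_eq_conditional_prob_general {Ω : Type*} [MeasurableSpace Ω]
    {P : Measure Ω} {Θ : Ω → ι → ℝ} {Y : Ω → ℝ} (hΘ : HasLaw Θ Φ P)
    (hY : HasLaw Y (paretoMeasure 1 1) P) (hindep : IndepFun Y Θ P)
    (hΦ_le : ∀ᵐ w ∂Φ, w ≤ 1) (hΦ_pos : ∃ᵐ w ∂Φ, 0 < w) (hc₀ : c ≠ 0) (hc : c ≠ ⊤)
    {ν : Set (ι → ℝ) → ℝ≥0∞}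
    (hν : ∀ B, MeasurableSet B → ν B = c * ∫⁻ w, (∫⁻ y in Ioi (0 : ℝ),
      B.indicator (fun _ => (1 : ℝ≥0∞)) (y • w) / ENNReal.ofReal (y ^ 2)) ∂Φ) :
    0 < ν (Ici 0 \ Iic 1) ∧ ν (Ici 0 \ Iic 1) < ⊤ ∧
      ∀ B : Set (ι → ℝ), MeasurableSet B →
        ν (B ∩ (Ici 0 \ Iic 1)) / ν (Ici 0 \ Iic 1)
          = P {ω | Y ω • Θ ω ∈ B ∩ (Ici 0 \ Iic 1)} / P {ω | Y ω • Θ ω ∈ Ici 0 \ Iic 1} := by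
  have := isProbabilityMeasure_paretoMeasure one_pos one_pos
  have := hY.isProbabilityMeasure
  have diff_measurable : MeasurableSet (Ici (0 : ι → ℝ) \ Iic 1) :=
    measurableSet_Ici.diff measurableSet_Iic
  have ν_eq_exponentMeasure {B : Set (ι → ℝ)} (hB : MeasurableSet B) :
      ν B = exponentMeasure c Φ B := by
    rw [hν B hB, exponentMeasure_apply_eq_lintegral_indicator hB]
  have ν_eq_mul {C : Set (ι → ℝ)} (hC : MeasurableSet C) (hC_sub : C ⊆ Ici 0 \ Iic 1) :
      ν C = c * P {ω | Y ω • Θ ω ∈ C} := by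
    rw [ν_eq_exponentMeasure hC]
    exact exponentMeasure_eq_mul_measure_smul_mem hΘ hY hindep hΦ_le hC fun x hx => (hC_sub hx).2
  refine ⟨?_, ?_, fun B hB => ?_⟩
  · rw [ν_eq_exponentMeasure diff_measurable]
    exact exponentMeasure_Ici_diff_Iic_pos hc₀ hΦ_pos
  · rw [ν_eq_mul diff_measurable subset_rfl]
    exact ENNReal.mul_lt_top hc.lt_top (measure_lt_top _ _)
  · rw [ν_eq_mul diff_measurable subset_rfl, ν_eq_mul (hB.inter diff_measurable) inter_subset_right]
    exact ENNReal.mul_div_mul_left _ _ hc₀ hc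

end Exceedance

lemma setOf_mem_Icc_and_sum_abs_eq_one_eq_stdSimplex {ι : Type*} [Fintype ι] :
    {x : ι → ℝ | (∀ j, 0 ≤ x j ∧ x j ≤ 1) ∧ ∑ j, |x j| = 1} = stdSimplex ℝ ι := by
  ext x
  have sum_abs_eq (hx : ∀ j, 0 ≤ x j) : ∑ j, |x j| = ∑ j, x j :=
    Finset.sum_congr rfl fun j _ => abs_of_nonneg (hx j)
  constructor
  · rintro ⟨hx, hsum⟩
    exact ⟨fun j => (hx j).1, (sum_abs_eq fun j => (hx j).1) ▸ hsum⟩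
  · intro hx
    exact ⟨mem_Icc_of_mem_stdSimplex hx, (sum_abs_eq hx.1).trans hx.2⟩

lemma setOf_nonneg_and_exists_one_lt_eq_Ici_diff_Iic {ι : Type*} :
    {x : ι → ℝ | (∀ j, 0 ≤ x j) ∧ ∃ j, 1 < x j} = Ici 0 \ Iic 1 := by
  ext x
  simp [Pi.le_def]

lemma pos_of_mem_stdSimplex {ι : Type*} [Fintype ι] {w : ι → ℝ} (hw : w ∈ stdSimplex ℝ ι) :
    0 < w := by
  refine lt_of_le_of_ne hw.1 ?_
  rintro rfl
  simpa using hw.2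

/-- With `ν(B) = d·∫_{Δ} ∫_0^∞ 1_B(y·w) y⁻² dy dΦ(w)`, `Θ ~ Φ` on the unit simplex and `Y`
unit-Pareto independent of `Θ`, one has `0 < ν(𝕃₁) < ∞` and
`ν(B ∩ 𝕃₁)/ν(𝕃₁) = P(Y·Θ ∈ B | Y·Θ ∈ 𝕃₁)` for every Borel `B ⊆ [0,∞)^d`. -/
theorem exponent_measure_ratio_eq_conditional_prob
    {d : ℕ} {Ω : Type*} [MeasurableSpace Ω] (ℙ : Measure Ω) [IsProbabilityMeasure ℙ]
    (Φ : Measure (Fin d → ℝ)) [IsProbabilityMeasure Φ]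
    (Δ : Set (Fin d → ℝ))
    (hΔ : Δ = {x | (∀ j, 0 ≤ x j ∧ x j ≤ 1) ∧ ∑ j, |x j| = 1})
    (hΦ : Φ Δᶜ = 0)
    (Θ : Ω → Fin d → ℝ) (hΘ : Measurable Θ) (hlaw : Measure.map Θ ℙ = Φ)
    (Y : Ω → ℝ) (hY : Measurable Y)
    (hPareto : ∀ y : ℝ, 1 ≤ y → (ℙ {ω | y < Y ω}).toReal = 1 / y)
    (hindep : ProbabilityTheory.IndepFun Y Θ ℙ)
    (L1 : Set (Fin d → ℝ)) (hL1 : L1 = {x | (∀ j, 0 ≤ x j) ∧ ∃ j, 1 < x j})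
    (ν : Set (Fin d → ℝ) → ℝ≥0∞)
    (hν : ∀ B : Set (Fin d → ℝ),
      ν B = d * ∫⁻ w in Δ,
        (∫⁻ y in Ioi (0 : ℝ),
          B.indicator (fun _ => (1 : ℝ≥0∞)) (y • w) / ENNReal.ofReal (y ^ 2)) ∂Φ) :
    0 < ν L1 ∧ ν L1 < ⊤ ∧
      ∀ B : Set (Fin d → ℝ), MeasurableSet B → B ⊆ {x | ∀ j, 0 ≤ x j} →
        ν (B ∩ L1) / ν L1
          = ℙ {ω | Y ω • Θ ω ∈ B ∩ L1} / ℙ {ω | Y ω • Θ ω ∈ L1} := by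
  rw [setOf_mem_Icc_and_sum_abs_eq_one_eq_stdSimplex] at hΔ
  rw [setOf_nonneg_and_exists_one_lt_eq_Ici_diff_Iic] at hL1
  subst hΔ hL1
  have mem_stdSimplex : ∀ᵐ w ∂Φ, w ∈ stdSimplex ℝ (Fin d) := hΦ
  obtain ⟨-, j, -⟩ := Pi.lt_def.1 (pos_of_mem_stdSimplex mem_stdSimplex.exists.choose_spec)
  simp only [Measure.restrict_eq_self_of_ae_mem mem_stdSimplex] at hν
  obtain ⟨pos, lt_top, ratio_eq⟩ := exponent_measure_ratio_eq_conditional_prob_general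
    ⟨hΘ.aemeasurable, hlaw⟩ (hasLaw_paretoMeasure_of_tail hY.aemeasurable hPareto) hindep
    (mem_stdSimplex.mono fun w hw => (stdSimplex_subset_Icc ℝ hw).2)
    (mem_stdSimplex.mono fun _ => pos_of_mem_stdSimplex).frequently
    (Nat.cast_ne_zero.2 j.pos.ne') (ENNReal.natCast_ne_top d) fun B _ => hν B
  exact ⟨pos, lt_top, fun B hB _ => ratio_eq B hB⟩
end

section
/- (Change of norm for angular measures.) Let ‖·‖ be a norm on ℝ^d, let Δ̃ = {x ∈ [0,∞)^d : ‖x‖ = 1}, let Φ be a probability measure on the unit simplex Δ_{d-1}, and let Ψ be a finite Borel measure on Δ̃. Assume that for every bounded Borel function f : [0,∞)^d → ℝ vanishing on a neighborhood of 0, d · ∫_{Δ_{d-1}} ∫_0^∞ f(r·w) r^{-2} dr dΦ(w) = ∫_{Δ̃} ∫_0^∞ f(r·w̃) r^{-2} dr dΨ(w̃). Then for every bounded Borel function g : Δ̃ → ℝ, ∫_{Δ̃} g dΨ = d · ∫_{Δ_{d-1}} g(w/‖w‖) · ‖w‖ dΦ(w); in particular Ψ(Δ̃) = d · ∫_{Δ_{d-1}}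 ‖w‖ dΦ(w), and the normalized measure Φ̃ = Ψ/Ψ(Δ̃) satisfies ∫ g dΦ̃ = ( ∫_{Δ_{d-1}} g(w/‖w‖) ‖w‖ dΦ(w) ) / ( ∫_{Δ_{d-1}} ‖w‖ dΦ(w) ). -/
open MeasureTheory Filter Set
open scoped ENNReal

/-!
The identity of polar integrals is tested on `x ↦ 𝟙(n x > 1) g(x / n x)`. Along the ray through `w`
it is the constant `g(w / n w)` on `r > 1 / n w`, and `∫ r⁻² dr` over that half-line is `n w`. Hence
`Ψ` is the image of the measure `d · n dΦ` under `w ↦ w / n w`.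
-/

section RadialExtension

variable {E : Type*} [AddCommGroup E] [Module ℝ E] {n g : E → ℝ}

/-- The extension of `g` from `{x | n x = 1}` to a function constant along rays, cut off to
`{x | 1 < n x}` so that it vanishes near the origin. -/
noncomputable def radialExtension (n g : E → ℝ) : E → ℝ :=
  {x | 1 < n x}.indicator fun x => g ((n x)⁻¹ • x)

lemma measurable_inv_smul_self [MeasurableSpace E] [MeasurableSMul₂ ℝ E] (hn : Measurable n) :
    Measurable fun x => (n x)⁻¹ • x :=
  hn.inv.smul measurable_id

lemma measurable_radialExtension [MeasurableSpace E] [MeasurableSMul₂ ℝ E]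
    (hn : Measurable n) (hg : Measurable g) : Measurable (radialExtension n g) :=
  (hg.comp (measurable_inv_smul_self hn)).indicator (measurableSet_lt measurable_const hn)

lemma abs_radialExtension_le {C : ℝ} (hg : ∀ x, |g x| ≤ C) (x : E) :
    |radialExtension n g x| ≤ C :=
  (norm_indicator_le_norm_self (fun x => g ((n x)⁻¹ • x)) x).trans (hg _)

lemma map_zero_of_pos_homogeneous (hn_smul : ∀ r > 0, ∀ x, n (r • x) = r * n x) : n 0 = 0 := by
  have h := hn_smul 2 two_pos 0
  rw [smul_zero] at h
  linarith

lemma radialExtension_eventually_eq_zero [TopologicalSpace E]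
    (hn_cont : ContinuousAt n 0) (hn_smul : ∀ r > 0, ∀ x, n (r • x) = r * n x) :
    ∀ᶠ x in nhds 0, radialExtension n g x = 0 := by
  have h_lt : ∀ᶠ x in nhds 0, n x < 1 :=
    hn_cont.eventually_lt_const (by simp [map_zero_of_pos_homogeneous hn_smul])
  filter_upwards [h_lt] with x hx
  exact indicator_of_notMem (s := {x | 1 < n x}) (not_lt_of_gt hx) _

lemma radialExtension_smul (hn_smul : ∀ r > 0, ∀ x, n (r • x) = r * n x)
    {w : E} (hw : 0 < n w) {r : ℝ} (hr : 0 < r) :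
    radialExtension n g (r • w) =
      (Ioi (n w)⁻¹).indicator (fun _ => g ((n w)⁻¹ • w)) r := by
  have h_mem : 1 < n (r • w) ↔ (n w)⁻¹ < r := by
    rw [hn_smul r hr, inv_lt_iff_one_lt_mul₀ hw]
  have h_dir : (n (r • w))⁻¹ • r • w = (n w)⁻¹ • w := by
    rw [hn_smul r hr, smul_smul, mul_inv_rev, inv_mul_cancel_right₀ hr.ne']
  simp only [radialExtension, indicator_apply, mem_ofPred_eq, mem_Ioi, h_mem, h_dir]

lemma integral_Ioi_div_sq (b : ℝ) {a : ℝ} (ha : 0 < a) : ∫ r in Ioi a, b / r ^ 2 = b * a⁻¹ := by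
  have h_rpow : ∀ r ∈ Ioi a, b / r ^ 2 = b * r ^ (-2 : ℝ) := fun r hr => by
    rw [Real.rpow_neg (ha.trans hr).le, Real.rpow_two, div_eq_mul_inv]
  rw [setIntegral_congr_fun measurableSet_Ioi h_rpow, integral_const_mul,
    integral_Ioi_rpow_of_lt (by norm_num) ha]
  norm_num [Real.rpow_neg_one]

lemma integral_radialExtension_smul_div_sq (hn_smul : ∀ r > 0, ∀ x, n (r • x) = r * n x)
    {w : E} (hw : 0 < n w) :
    ∫ r in Ioi (0 : ℝ), radialExtension n g (r • w) / r ^ 2 = g ((n w)⁻¹ • w) * n w := by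
  have h_ray : ∀ r ∈ Ioi (0 : ℝ), radialExtension n g (r • w) / r ^ 2 =
      (Ioi (n w)⁻¹).indicator (fun r => g ((n w)⁻¹ • w) / r ^ 2) r := fun r hr => by
    rw [radialExtension_smul hn_smul hw hr]
    simp only [indicator_apply, ite_div, zero_div]
  have h_pos : 0 < (n w)⁻¹ := inv_pos.2 hw
  rw [setIntegral_congr_fun measurableSet_Ioi h_ray, setIntegral_indicator measurableSet_Ioi,
    Ioi_inter_Ioi, sup_eq_right.2 h_pos.le, integral_Ioi_div_sq _ h_pos, inv_inv]

end RadialExtension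

section PolarIntegrals

variable {E : Type*} [AddCommGroup E] [Module ℝ E] [TopologicalSpace E] [MeasurableSpace E]
  {n : E → ℝ} {c : ℝ} {Φ Ψ : Measure E}

/-- The measures with polar decompositions `c r⁻² dr dΦ(w)` and `r⁻² dr dΨ(w)` integrate every
bounded measurable function vanishing near the origin to the same value. -/
def SamePolarIntegrals (c : ℝ) (Φ Ψ : Measure E) : Prop :=
  ∀ f : E → ℝ, Measurable f → (∃ C, ∀ x, |f x| ≤ C) → (∃ s ∈ nhds (0 : E), ∀ x ∈ s, f x = 0) →
    c * ∫ w, (∫ r in Ioi (0 : ℝ), f (r • w) / r ^ 2) ∂Φ =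
      ∫ w, (∫ r in Ioi (0 : ℝ), f (r • w) / r ^ 2) ∂Ψ

namespace SamePolarIntegrals

variable [MeasurableSMul₂ ℝ E]

lemma integral_eq_of_bounded (h : SamePolarIntegrals c Φ Ψ)
    (hn : Measurable n) (hn_cont : ContinuousAt n 0)
    (hn_smul : ∀ r > 0, ∀ x, n (r • x) = r * n x)
    (hΦ : ∀ᵐ w ∂Φ, 0 < n w) (hΨ : ∀ᵐ w ∂Ψ, n w = 1)
    {g : E → ℝ} (hg : Measurable g) {C : ℝ} (hC : ∀ x, |g x| ≤ C) :
    ∫ w, g w ∂Ψ = c * ∫ w, g ((n w)⁻¹ • w) * n w ∂Φ := by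
  have h_left : ∀ᵐ w ∂Φ, ∫ r in Ioi (0 : ℝ), radialExtension n g (r • w) / r ^ 2 =
      g ((n w)⁻¹ • w) * n w :=
    hΦ.mono fun w hw => integral_radialExtension_smul_div_sq hn_smul hw
  have h_right : ∀ᵐ w ∂Ψ, ∫ r in Ioi (0 : ℝ), radialExtension n g (r • w) / r ^ 2 = g w :=
    hΨ.mono fun w hw => by
      rw [integral_radialExtension_smul_div_sq hn_smul (by simp [hw]), hw, inv_one, one_smul,
        mul_one]
  rw [← integral_congr_ae h_left, ← integral_congr_ae h_right]
  exact (h _ (measurable_radialExtension hn hg) ⟨C, abs_radialExtension_le hC⟩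
    (eventually_iff_exists_mem.1 (radialExtension_eventually_eq_zero hn_cont hn_smul))).symm

theorem eq_smul_map_withDensity [IsFiniteMeasure Ψ] (h : SamePolarIntegrals c Φ Ψ) (hc : 0 ≤ c)
    (hn : Measurable n) (hn_cont : ContinuousAt n 0)
    (hn_smul : ∀ r > 0, ∀ x, n (r • x) = r * n x)
    (hΦ : ∀ᵐ w ∂Φ, 0 < n w) (hΦ_int : Integrable n Φ) (hΨ : ∀ᵐ w ∂Ψ, n w = 1) :
    Ψ = ENNReal.ofReal c •
      (Φ.withDensity fun w => ENNReal.ofReal (n w)).map fun w => (n w)⁻¹ • w := by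
  have h_dir : Measurable fun w => (n w)⁻¹ • w := measurable_inv_smul_self hn
  ext A hA
  let B := (fun w => (n w)⁻¹ • w) ⁻¹' A
  have hB : MeasurableSet B := h_dir hA
  have h_real : Ψ.real A = c * ∫ w in B, n w ∂Φ := by
    have h_test := h.integral_eq_of_bounded hn hn_cont hn_smul hΦ hΨ
      (measurable_const.indicator hA) (g := A.indicator fun _ => 1) (C := 1)
      (fun x => (norm_indicator_le_norm_self (fun _ => (1 : ℝ)) x).trans norm_one.le)
    have h_ind : ∀ w, A.indicator (fun _ => (1 : ℝ)) ((n w)⁻¹ • w) * n w = B.indicator n w :=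
      fun w => by
        classical
        simp only [B, indicator_apply, mem_preimage, ite_mul, one_mul, zero_mul]
    simpa only [h_ind, integral_indicator hA, integral_indicator hB, setIntegral_const,
      smul_eq_mul, mul_one] using h_test
  calc Ψ A = ENNReal.ofReal (c * ∫ w in B, n w ∂Φ) := by rw [← h_real, ofReal_measureReal]
    _ = ENNReal.ofReal c * ∫⁻ w in B, ENNReal.ofReal (n w) ∂Φ := by
      rw [ENNReal.ofReal_mul hc, ofReal_integral_eq_lintegral_ofReal hΦ_int.integrableOn
        (ae_restrict_of_ae (hΦ.mono fun w hw => hw.le))]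
    _ = _ := by
      rw [Measure.smul_apply, Measure.map_apply h_dir hA, withDensity_apply _ hB, smul_eq_mul]

theorem integral_eq [IsFiniteMeasure Ψ] (h : SamePolarIntegrals c Φ Ψ) (hc : 0 ≤ c)
    (hn : Measurable n) (hn_cont : ContinuousAt n 0)
    (hn_smul : ∀ r > 0, ∀ x, n (r • x) = r * n x)
    (hΦ : ∀ᵐ w ∂Φ, 0 < n w) (hΦ_int : Integrable n Φ) (hΨ : ∀ᵐ w ∂Ψ, n w = 1)
    {g : E → ℝ} (hg : Measurable g) :
    ∫ w, g w ∂Ψ = c * ∫ w, g ((n w)⁻¹ • w) * n w ∂Φ := by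
  have h_density : ∀ᵐ w ∂Φ, (ENNReal.ofReal (n w)).toReal • g ((n w)⁻¹ • w) =
      g ((n w)⁻¹ • w) * n w := hΦ.mono fun w hw => by
    rw [ENNReal.toReal_ofReal hw.le, smul_eq_mul, mul_comm]
  rw [h.eq_smul_map_withDensity hc hn hn_cont hn_smul hΦ hΦ_int hΨ, integral_smul_measure,
    integral_map (measurable_inv_smul_self hn).aemeasurable hg.aestronglyMeasurable,
    integral_withDensity_eq_integral_toReal_smul hn.ennreal_ofReal (by simp),
    integral_congr_ae h_density, ENNReal.toReal_ofReal hc, smul_eq_mul]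

end SamePolarIntegrals

theorem angular_measure_change_of_norm_general [MeasurableSMul₂ ℝ E] [IsFiniteMeasure Ψ]
    (hc : 0 < c) (hn : Measurable n) (hn_cont : ContinuousAt n 0)
    (hn_smul : ∀ r > 0, ∀ x, n (r • x) = r * n x)
    (hΦ : ∀ᵐ w ∂Φ, 0 < n w) (hΦ_int : Integrable n Φ) (hΨ : ∀ᵐ w ∂Ψ, n w = 1)
    (h : SamePolarIntegrals c Φ Ψ) {g : E → ℝ} (hg : Measurable g) :
    (∫ w, g w ∂Ψ = c * ∫ w, g ((n w)⁻¹ • w) * n w ∂Φ) ∧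
    ((Ψ univ).toReal = c * ∫ w, n w ∂Φ) ∧
    (∫ w, g w ∂((Ψ univ)⁻¹ • Ψ)
      = (∫ w, g ((n w)⁻¹ • w) * n w ∂Φ) / ∫ w, n w ∂Φ) := by
  have h_integral {g : E → ℝ} (hg : Measurable g) :=
    h.integral_eq hc.le hn hn_cont hn_smul hΦ hΦ_int hΨ hg
  have h_mass : (Ψ univ).toReal = c * ∫ w, n w ∂Φ := by
    simpa [Measure.real] using h_integral (measurable_const (a := (1 : ℝ)))
  refine ⟨h_integral hg, h_mass, ?_⟩
  rw [integral_smul_measure, h_integral hg, ENNReal.toReal_inv, h_mass, smul_eq_mul,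
    ← div_eq_inv_mul, mul_div_mul_left _ _ hc.ne']

end PolarIntegrals

lemma continuous_seminorm_of_finiteDimensional {E : Type*} [NormedAddCommGroup E]
    [NormedSpace ℝ E] [FiniteDimensional ℝ E] (p : Seminorm ℝ E) : Continuous p :=
  continuousOn_univ.1 (p.convexOn.continuousOn isOpen_univ)

lemma setOf_sum_abs_eq_one_eq_stdSimplex (ι : Type*) [Fintype ι] :
    {x : ι → ℝ | (∀ j, 0 ≤ x j ∧ x j ≤ 1) ∧ ∑ j, |x j| = 1} = stdSimplex ℝ ι := by
  ext x
  constructor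
  · rintro ⟨hx, hsum⟩
    exact ⟨fun j => (hx j).1, by simpa only [abs_of_nonneg (hx _).1] using hsum⟩
  · intro hx
    exact ⟨mem_Icc_of_mem_stdSimplex hx, by simpa only [abs_of_nonneg (hx.1 _)] using hx.2⟩

lemma ne_zero_of_mem_stdSimplex {ι : Type*} [Fintype ι] {x : ι → ℝ} (hx : x ∈ stdSimplex ℝ ι) :
    x ≠ 0 := by
  rintro rfl
  simpa using hx.2

/-- Change of norm for angular measures: if the angular measure `Φ` (w.r.t. the `L¹`-norm, on the
unit simplex `Δ`) and the finite measure `Ψ` on the unit sphere `Δ̃` of an arbitrary norm `n`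
give the same polar integrals `∫∫ f(r·w) r⁻² dr` (for bounded Borel `f` vanishing near `0`, with
the factor `d` on the simplex side), then for every bounded Borel `g`,
`∫_{Δ̃} g dΨ = d·∫_Δ g(w/n(w))·n(w) dΦ`; in particular `Ψ(Δ̃) = d·∫_Δ n(w) dΦ` and the
normalized measure `Φ̃ = Ψ/Ψ(Δ̃)` satisfies
`∫ g dΦ̃ = (∫_Δ g(w/n(w)) n(w) dΦ) / (∫_Δ n(w) dΦ)`. -/
theorem angular_measure_change_of_norm
    {d : ℕ}
    (n : (Fin d → ℝ) → ℝ)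
    (hn_nonneg : ∀ x, 0 ≤ n x)
    (hn_eq_zero : ∀ x, n x = 0 ↔ x = 0)
    (hn_smul : ∀ (a : ℝ) (x : Fin d → ℝ), n (a • x) = |a| * n x)
    (hn_add : ∀ x y, n (x + y) ≤ n x + n y)
    (Δ : Set (Fin d → ℝ))
    (hΔ : Δ = {x | (∀ j, 0 ≤ x j ∧ x j ≤ 1) ∧ ∑ j, |x j| = 1})
    (Δt : Set (Fin d → ℝ)) (hΔt : Δt = {x | (∀ j, 0 ≤ x j) ∧ n x = 1})
    (Φ : Measure (Fin d → ℝ)) [IsProbabilityMeasure Φ] (hΦ : Φ Δᶜ = 0)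
    (Ψ : Measure (Fin d → ℝ)) [IsFiniteMeasure Ψ] (hΨ : Ψ Δtᶜ = 0)
    (hdual : ∀ f : (Fin d → ℝ) → ℝ, Measurable f → (∃ C, ∀ x, |f x| ≤ C) →
      (∃ s ∈ nhds (0 : Fin d → ℝ), ∀ x ∈ s, f x = 0) →
      d * ∫ w in Δ, (∫ r in Ioi (0 : ℝ), f (r • w) / r ^ 2) ∂Φ
        = ∫ w in Δt, (∫ r in Ioi (0 : ℝ), f (r • w) / r ^ 2) ∂Ψ) :
    ∀ g : (Fin d → ℝ) → ℝ, Measurable g → (∃ C, ∀ x, |g x| ≤ C) →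
      (∫ w in Δt, g w ∂Ψ = d * ∫ w in Δ, g ((n w)⁻¹ • w) * n w ∂Φ) ∧
      ((Ψ Δt).toReal = d * ∫ w in Δ, n w ∂Φ) ∧
      (∫ w in Δt, g w ∂((Ψ Δt)⁻¹ • Ψ)
        = (∫ w in Δ, g ((n w)⁻¹ • w) * n w ∂Φ) / ∫ w in Δ, n w ∂Φ) := by
  have hn : Continuous n :=
    continuous_seminorm_of_finiteDimensional (Seminorm.of n hn_add hn_smul)
  rw [setOf_sum_abs_eq_one_eq_stdSimplex] at hΔ
  have hd : 0 < d := Nat.pos_of_ne_zero fun h => by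
    subst h
    simp [hΔ, stdSimplex_of_isEmpty_index] at hΦ
  have hΔ_compact : IsCompact Δ := hΔ ▸ isCompact_stdSimplex ℝ (Fin d)
  have hΔt_meas : MeasurableSet Δt := by
    rw [hΔt]
    measurability
  have hΔ_pos : ∀ w ∈ Δ, 0 < n w := fun w hw =>
    (hn_nonneg w).lt_of_ne' <| mt (hn_eq_zero w).1 (ne_zero_of_mem_stdSimplex (hΔ ▸ hw))
  intro g hg _
  simpa only [Measure.restrict_smul, Measure.restrict_apply_univ] using
    angular_measure_change_of_norm_general (Nat.cast_pos.2 hd) hn.measurable hn.continuousAt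
      (fun r hr x => by rw [hn_smul, abs_of_pos hr])
      (ae_restrict_of_forall_mem hΔ_compact.measurableSet hΔ_pos)
      (hn.continuousOn.integrableOn_compact hΔ_compact)
      (ae_restrict_of_forall_mem hΔt_meas fun w hw => (hΔt ▸ hw).2) hdual hg
end
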